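/- arXiv:2311.07018 — 4 statements merged into one kernel-verified Lean document; each statement's English description precedes it below -/
import Mathlib

section
/- Let n ∈ ℕ, t ≥ 0 and K ∈ ℝ. Let A : [t,∞) → ℝ^{n×n} be measurable and satisfy the dissipation condition with constant κ ∈ ℝ where K < κ, let b ∈ L^{2,K}(t,∞;ℝ^n), and let x : [t,∞) → ℝ^n be locally absolutely continuous with x'(s) = A(s)x(s) + b(s) for almost every s ≥ t. Then x ∈ L^{2,K}(t,∞;ℝ^n), and for every ε ∈ (0, 2κ − 2K) one has (−2K + 2κ − ε) ∫_t^∞ e^{2Ks}|x(s)|² ds ≤ e^{2Kt}|x(t)|² + (1/ε) ∫_t^∞ e^{2Ks}|b(s)|² ds. -/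
open MeasureTheory Matrix

/-!
The weighted energy `w s = exp (2 K s) |x s|²` is locally absolutely continuous, and dissipativity
together with Young's inequality gives `w' ≤ -(2κ - 2K - ε) w + ε⁻¹ exp (2 K s) |b s|²` almost
everywhere. Integrating over `[t, T]`, dropping `w T ≥ 0` and letting `T → ∞` bounds `∫ w`; the
choice `ε = κ - K` makes the coefficient positive, which gives integrability.
-/

section AbsoluteContinuity

variable {X Y F : Type*} [PseudoMetricSpace X] [PseudoMetricSpace Y] [SeminormedAddCommGroup F]
  {a b : ℝ}

theorem absolutelyContinuousOnInterval_of_dist_le {f : ℝ → X} {g : ℝ → Y} (C : ℝ)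
    (hg : AbsolutelyContinuousOnInterval g a b)
    (hfg : ∀ r ∈ Set.uIcc a b, ∀ s ∈ Set.uIcc a b, dist (f r) (f s) ≤ C * dist (g r) (g s)) :
    AbsolutelyContinuousOnInterval f a b := by
  refine squeeze_zero' (.of_forall fun _ => Finset.sum_nonneg fun _ _ => dist_nonneg) ?_
    (by simpa only [mul_zero] using Filter.Tendsto.const_mul C hg)
  filter_upwards [Filter.mem_inf_of_right (Filter.mem_principal_self _)] with E hE
  rw [Finset.mul_sum]
  exact Finset.sum_le_sum fun i hi => hfg _ (hE.1 i hi).1 _ (hE.1 i hi).2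

theorem absolutelyContinuousOnInterval_comp_of_locallyLipschitz {φ : F → X} {f : ℝ → F}
    (hφ : LocallyLipschitz φ) (hf : AbsolutelyContinuousOnInterval f a b) :
    AbsolutelyContinuousOnInterval (φ ∘ f) a b := by
  have himage : IsCompact (f '' Set.uIcc a b) :=
    isCompact_uIcc.image_of_continuousOn hf.continuousOn
  obtain ⟨C, hC⟩ := hφ.locallyLipschitzOn.exists_lipschitzOnWith_of_compact himage
  exact absolutelyContinuousOnInterval_of_dist_le C hf fun r hr s hs =>
    hC.dist_le_mul _ (Set.mem_image_of_mem f hr) _ (Set.mem_image_of_mem f hs)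

end AbsoluteContinuity

section Primitive

variable {E : Type*} [NormedAddCommGroup E] [NormedSpace ℝ E] {g x : ℝ → E} {t : ℝ}

theorem absolutelyContinuousOnInterval_of_eq_add_integral {T : ℝ}
    (hg : IntervalIntegrable g volume t T)
    (hx : ∀ s ∈ Set.uIcc t T, x s = x t + ∫ r in t..s, g r) :
    AbsolutelyContinuousOnInterval x t T := by
  refine absolutelyContinuousOnInterval_of_dist_le 1
    (hg.norm.absolutelyContinuousOnInterval_intervalIntegral Set.left_mem_uIcc) fun r hr s hs => ?_
  have hgr := hg.mono_set (Set.uIcc_subset_uIcc_left hr)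
  have hgs := hg.mono_set (Set.uIcc_subset_uIcc_left hs)
  rw [hx r hr, hx s hs, dist_add_left, dist_eq_norm, Real.dist_eq, one_mul,
    intervalIntegral.integral_interval_sub_left hgr hgs,
    intervalIntegral.integral_interval_sub_left hgr.norm hgs.norm]
  exact intervalIntegral.norm_integral_le_abs_integral_norm

theorem ae_hasDerivAt_of_eq_add_integral [CompleteSpace E]
    (hg : ∀ T, t ≤ T → IntervalIntegrable g volume t T)
    (hx : ∀ s, t ≤ s → x s = x t + ∫ r in t..s, g r) :
    ∀ᵐ s ∂volume.restrict (Set.Ioi t), HasDerivAt x (g s) s := by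
  have hderiv (n : ℕ) := (hg (t + n) (le_add_of_nonneg_right n.cast_nonneg)).ae_hasDerivAt_integral
  filter_upwards [ae_restrict_of_ae (ae_all_iff.2 hderiv), ae_restrict_mem measurableSet_Ioi]
    with s hs hts
  obtain ⟨n, hn⟩ := exists_nat_ge (s - t)
  have hsn : s ∈ Set.uIcc t (t + n) := Set.mem_uIcc_of_le hts.le (by linarith)
  refine ((hs n hsn t Set.left_mem_uIcc).const_add (x t)).congr_of_eventuallyEq ?_
  filter_upwards [Ioi_mem_nhds hts] with r hr using hx r hr.le

end Primitive

section DissipationInequality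

variable {t c : ℝ} {w β : ℝ → ℝ}

theorem mul_intervalIntegral_le_of_deriv_le_sub_mul {T : ℝ} (htT : t ≤ T)
    (hw : AbsolutelyContinuousOnInterval w t T) (hβ : IntervalIntegrable β volume t T)
    (hderiv : ∀ᵐ s ∂volume.restrict (Set.Icc t T), deriv w s ≤ β s - c * w s) :
    c * ∫ s in t..T, w s ≤ w t - w T + ∫ s in t..T, β s := by
  have hcw : IntervalIntegrable (fun s => c * w s) volume t T :=
    hw.continuousOn.intervalIntegrable.const_mul c
  have hint : w T - w t ≤ (∫ s in t..T, β s) - c * ∫ s in t..T, w s :=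
    calc w T - w t = ∫ s in t..T, deriv w s := hw.integral_deriv_eq_sub.symm
      _ ≤ ∫ s in t..T, (β s - c * w s) :=
        intervalIntegral.integral_mono_ae_restrict htT hw.intervalIntegrable_deriv
          (hβ.sub hcw) hderiv
      _ = (∫ s in t..T, β s) - c * ∫ s in t..T, w s := by
        rw [intervalIntegral.integral_sub hβ hcw, intervalIntegral.integral_const_mul]
  linarith

theorem mul_intervalIntegral_le_of_nonneg_of_deriv_le_sub_mul {T : ℝ} (htT : t ≤ T)
    (hw : AbsolutelyContinuousOnInterval w t T) (hwT : 0 ≤ w T)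
    (hβ : IntegrableOn β (Set.Ioi t))
    (hderiv : ∀ᵐ s ∂volume.restrict (Set.Ioi t), deriv w s ≤ β s - c * w s) :
    c * ∫ s in t..T, w s ≤ w t + ∫ s in t..T, β s := by
  have hβT : IntervalIntegrable β volume t T :=
    (intervalIntegrable_iff_integrableOn_Ioc_of_le htT).2 (hβ.mono_set Set.Ioc_subset_Ioi_self)
  have hderivT : ∀ᵐ s ∂volume.restrict (Set.Icc t T), deriv w s ≤ β s - c * w s := by
    rw [← restrict_Ioc_eq_restrict_Icc]
    exact ae_restrict_of_ae_restrict_of_subset Set.Ioc_subset_Ioi_self hderiv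
  linarith [mul_intervalIntegral_le_of_deriv_le_sub_mul htT hw hβT hderivT]

theorem mul_integral_Ioi_le_of_deriv_le_sub_mul
    (hw : ∀ T, t ≤ T → AbsolutelyContinuousOnInterval w t T) (hw_nonneg : ∀ s, t ≤ s → 0 ≤ w s)
    (hw_int : IntegrableOn w (Set.Ioi t)) (hβ : IntegrableOn β (Set.Ioi t))
    (hderiv : ∀ᵐ s ∂volume.restrict (Set.Ioi t), deriv w s ≤ β s - c * w s) :
    c * ∫ s in Set.Ioi t, w s ≤ w t + ∫ s in Set.Ioi t, β s := by
  refine le_of_tendsto_of_tendsto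
    ((intervalIntegral_tendsto_integral_Ioi t hw_int Filter.tendsto_id).const_mul c)
    ((intervalIntegral_tendsto_integral_Ioi t hβ Filter.tendsto_id).const_add (w t)) ?_
  filter_upwards [Filter.eventually_ge_atTop t] with T htT
  exact mul_intervalIntegral_le_of_nonneg_of_deriv_le_sub_mul htT (hw T htT) (hw_nonneg T htT)
    hβ hderiv

theorem integrableOn_Ioi_of_deriv_le_sub_mul (hc : 0 < c)
    (hw : ∀ T, t ≤ T → AbsolutelyContinuousOnInterval w t T) (hw_nonneg : ∀ s, t ≤ s → 0 ≤ w s)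
    (hβ : IntegrableOn β (Set.Ioi t))
    (hderiv : ∀ᵐ s ∂volume.restrict (Set.Ioi t), deriv w s ≤ β s - c * w s) :
    IntegrableOn w (Set.Ioi t) := by
  have hw_loc (T : ℝ) : IntegrableOn w (Set.Ioc t T) := by
    rcases le_total t T with htT | hTt
    · exact (hw T htT).continuousOn.intervalIntegrable.1
    · simp [Set.Ioc_eq_empty_of_le hTt]
  have hβ_lt := (intervalIntegral_tendsto_integral_Ioi t hβ Filter.tendsto_id).eventually_le_const
    (lt_add_one _)
  refine integrableOn_Ioi_of_intervalIntegral_norm_bounded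
    ((w t + ((∫ s in Set.Ioi t, β s) + 1)) / c) t hw_loc Filter.tendsto_id ?_
  filter_upwards [hβ_lt, Filter.eventually_ge_atTop t] with T hβT htT
  have hnorm : ∫ s in t..T, ‖w s‖ = ∫ s in t..T, w s := by
    refine intervalIntegral.integral_congr fun s hs => Real.norm_of_nonneg (hw_nonneg s ?_)
    exact (Set.uIcc_of_le htT ▸ hs).1
  rw [hnorm, le_div_iff₀' hc]
  exact (mul_intervalIntegral_le_of_nonneg_of_deriv_le_sub_mul htT (hw T htT) (hw_nonneg T htT)
    hβ hderiv).trans (add_le_add_right hβT _)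

end DissipationInequality

section QuadraticForm

theorem two_mul_apply_le_of_isPosSemidef {E : Type*} [AddCommGroup E] [Module ℝ E]
    {B : LinearMap.BilinForm ℝ E} (hB : B.IsPosSemidef) {ε : ℝ} (hε : 0 < ε) (u v : E) :
    2 * B u v ≤ 1 / ε * B u u + ε * B v v := by
  have hsq : ε * (1 / ε * B u u + ε * B v v - 2 * B u v) = B (u - ε • v) (u - ε • v) := by
    simp only [map_sub, map_smul, LinearMap.sub_apply, LinearMap.smul_apply, smul_eq_mul,
      hB.isSymm.eq v u]
    field_simp
    ring
  have := nonneg_of_mul_nonneg_right (hsq ▸ hB.isNonneg.nonneg _) hε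
  linarith

/-- The dot product on `ι → ℝ` as a continuous bilinear form: it carries the Euclidean square
although `ι → ℝ` is normed by the supremum. -/
noncomputable def dotProductForm (ι : Type*) [Fintype ι] : (ι → ℝ) →L[ℝ] (ι → ℝ) →L[ℝ] ℝ :=
  (dotProductBilin ℝ ℝ).toContinuousBilinearMap

theorem isPosSemidef_dotProductForm {ι : Type*} [Fintype ι] :
    (dotProductForm ι).toBilinForm.IsPosSemidef where
  eq := dotProduct_comm
  nonneg := dotProduct_self_star_nonneg

theorem add_transpose_mulVec_dotProduct_self {ι R : Type*} [Fintype ι] [CommRing R]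
    (M : Matrix ι ι R) (v : ι → R) : ((M + Mᵀ) *ᵥ v) ⬝ᵥ v = 2 * ((M *ᵥ v) ⬝ᵥ v) := by
  rw [add_mulVec, add_dotProduct, mulVec_transpose, ← dotProduct_mulVec, dotProduct_comm v, two_mul]

variable {E : Type*} [NormedAddCommGroup E] [NormedSpace ℝ E] (B : E →L[ℝ] E →L[ℝ] ℝ)

/-- The quadratic energy of `x` for the form `B`, with exponential weight of rate `k`; the paper's
`e^{2Ks}|x(s)|²` is the case `k = 2 * K` and `B` the Euclidean inner product. -/
noncomputable def weightedEnergy (k : ℝ) (x : ℝ → E) (s : ℝ) : ℝ :=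
  Real.exp (k * s) * B (x s) (x s)

variable {B} {k : ℝ} {x : ℝ → E}

theorem weightedEnergy_nonneg (hB : B.toBilinForm.IsPosSemidef) (s : ℝ) :
    0 ≤ weightedEnergy B k x s :=
  mul_nonneg (Real.exp_pos _).le (hB.isNonneg.nonneg _)

theorem absolutelyContinuousOnInterval_weightedEnergy {a b : ℝ}
    (hx : AbsolutelyContinuousOnInterval x a b) :
    AbsolutelyContinuousOnInterval (weightedEnergy B k x) a b := by
  have hexp : ContDiff ℝ 1 fun s => Real.exp (k * s) := by fun_prop
  have hquad : ContDiff ℝ 1 fun v => B v v := B.contDiff.clm_apply contDiff_id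
  have hquadx : AbsolutelyContinuousOnInterval (fun s => B (x s) (x s)) a b :=
    absolutelyContinuousOnInterval_comp_of_locallyLipschitz (φ := fun v => B v v)
      hquad.locallyLipschitz hx
  exact hexp.contDiffOn.absolutelyContinuousOnInterval.fun_mul hquadx

theorem hasDerivAt_weightedEnergy (hB : B.toBilinForm.IsSymm) {x' : E} {s : ℝ}
    (hx : HasDerivAt x x' s) :
    HasDerivAt (weightedEnergy B k x)
      (Real.exp (k * s) * (k * B (x s) (x s) + 2 * B x' (x s))) s := by
  have hexp : HasDerivAt (fun s => Real.exp (k * s)) (Real.exp (k * s) * k) s :=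
    (hasDerivAt_const_mul k).exp
  have hquad : HasDerivAt (fun s => B (x s) (x s)) (B x' (x s) + B (x s) x') s :=
    (B.hasFDerivAt.comp_hasDerivAt s hx).clm_apply hx
  refine (hexp.mul hquad).congr_deriv ?_
  have hsymm : B (x s) x' = B x' (x s) := hB.eq _ _
  rw [hsymm]
  ring

theorem deriv_weightedEnergy_le (hB : B.toBilinForm.IsPosSemidef) {K κ ε : ℝ} (hε : 0 < ε)
    {f : E → E} {b : ℝ → E} {s : ℝ} (hf : ∀ v, B (f v) v ≤ -κ * B v v)
    (hx : HasDerivAt x (f (x s) + b s) s) :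
    deriv (weightedEnergy B (2 * K) x) s ≤
      1 / ε * weightedEnergy B (2 * K) b s
        - (-2 * K + 2 * κ - ε) * weightedEnergy B (2 * K) x s := by
  have hyoung : 2 * B (b s) (x s) ≤ 1 / ε * B (b s) (b s) + ε * B (x s) (x s) :=
    two_mul_apply_le_of_isPosSemidef hB hε _ _
  rw [(hasDerivAt_weightedEnergy hB.isSymm hx).deriv]
  calc Real.exp (2 * K * s) * (2 * K * B (x s) (x s) + 2 * B (f (x s) + b s) (x s))
      ≤ Real.exp (2 * K * s) *
          (1 / ε * B (b s) (b s) - (-2 * K + 2 * κ - ε) * B (x s) (x s)) := by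
        rw [map_add, _root_.add_apply]
        gcongr
        linarith [hf (x s)]
    _ = _ := by
        simp only [weightedEnergy]
        ring

end QuadraticForm

theorem stmt_1_general {E : Type*} [NormedAddCommGroup E] [NormedSpace ℝ E] [CompleteSpace E]
    (B : E →L[ℝ] E →L[ℝ] ℝ) (hB : B.toBilinForm.IsPosSemidef) {t K κ : ℝ} (hK : K < κ)
    {A : ℝ → E → E} {b x : ℝ → E}
    (hdiss : ∀ᵐ s ∂volume.restrict (Set.Ici t), ∀ v, B (A s v) v ≤ -κ * B v v)
    (hbL2 : IntegrableOn (fun s => Real.exp (2 * K * s) * B (b s) (b s)) (Set.Ici t))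
    (hint : ∀ T, t ≤ T → IntegrableOn (fun s => A s (x s) + b s) (Set.Icc t T))
    (hx : ∀ s, t ≤ s → x s = x t + ∫ r in t..s, (A r (x r) + b r)) :
    IntegrableOn (fun s => Real.exp (2 * K * s) * B (x s) (x s)) (Set.Ici t) ∧
    ∀ ε, 0 < ε →
      (-2 * K + 2 * κ - ε) * ∫ s in Set.Ici t, Real.exp (2 * K * s) * B (x s) (x s)
        ≤ Real.exp (2 * K * t) * B (x t) (x t)
          + 1 / ε * ∫ s in Set.Ici t, Real.exp (2 * K * s) * B (b s) (b s) := by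
  have hinterval T (hT : t ≤ T) := (intervalIntegrable_iff_integrableOn_Icc_of_le hT).2 (hint T hT)
  have hAC T (hT : t ≤ T) : AbsolutelyContinuousOnInterval (weightedEnergy B (2 * K) x) t T :=
    absolutelyContinuousOnInterval_weightedEnergy <|
      absolutelyContinuousOnInterval_of_eq_add_integral (hinterval T hT) fun s hs =>
        hx s (Set.uIcc_of_le hT ▸ hs).1
  have hderiv ε (hε : 0 < ε) : ∀ᵐ s ∂volume.restrict (Set.Ioi t),
      deriv (weightedEnergy B (2 * K) x) s ≤ 1 / ε * weightedEnergy B (2 * K) b s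
        - (-2 * K + 2 * κ - ε) * weightedEnergy B (2 * K) x s := by
    filter_upwards [ae_restrict_of_ae_restrict_of_subset Set.Ioi_subset_Ici_self hdiss,
      ae_hasDerivAt_of_eq_add_integral hinterval hx] with s hAs hxs
    exact deriv_weightedEnergy_le hB hε hAs hxs
  have hnonneg s (_ : t ≤ s) := weightedEnergy_nonneg (k := 2 * K) (x := x) hB s
  rw [integrableOn_Ici_iff_integrableOn_Ioi] at hbL2 ⊢
  have hxL2 : IntegrableOn (weightedEnergy B (2 * K) x) (Set.Ioi t) :=
    integrableOn_Ioi_of_deriv_le_sub_mul (by linarith) hAC hnonneg (hbL2.const_mul _)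
      (hderiv (κ - K) (sub_pos.2 hK))
  refine ⟨hxL2, fun ε hε => ?_⟩
  rw [integral_Ici_eq_integral_Ioi, integral_Ici_eq_integral_Ioi, ← integral_const_mul (1 / ε)]
  exact mul_integral_Ioi_le_of_deriv_le_sub_mul hAC hnonneg hxL2 (hbL2.const_mul _) (hderiv ε hε)

/-- Deterministic global integrability result underlying Lemma 2.2:
if `A` satisfies the dissipation condition with constant `κ > K` and
`b ∈ L^{2,K}(t,∞)`, then any locally absolutely continuous solution of
`x' = A x + b` on `[t,∞)` belongs to `L^{2,K}(t,∞)` and satisfies the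
weighted energy estimate for every `ε ∈ (0, 2κ - 2K)`. -/
theorem stmt_1 (n : ℕ) (t K κ : ℝ) (ht : 0 ≤ t) (hK : K < κ)
    (A : ℝ → Matrix (Fin n) (Fin n) ℝ) (b x : ℝ → (Fin n → ℝ))
    (hA : ∀ i j, Measurable fun s => A s i j)
    (hb : Measurable b)
    (hdiss : ∀ᵐ s ∂(volume.restrict (Set.Ici t)),
      ∀ v : Fin n → ℝ, ((A s + (A s)ᵀ) *ᵥ v) ⬝ᵥ v ≤ -2 * κ * (v ⬝ᵥ v))
    (hbL2 : IntegrableOn (fun s => Real.exp (2*K*s) * (b s ⬝ᵥ b s)) (Set.Ici t))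
    (hint : ∀ T, t ≤ T → IntegrableOn (fun s => A s *ᵥ x s + b s) (Set.Icc t T))
    (hx : ∀ s, t ≤ s → x s = x t + ∫ r in t..s, (A r *ᵥ x r + b r)) :
    IntegrableOn (fun s => Real.exp (2*K*s) * (x s ⬝ᵥ x s)) (Set.Ici t) ∧
    ∀ ε, 0 < ε → ε < 2*κ - 2*K →
      (-2*K + 2*κ - ε) * ∫ s in Set.Ici t, Real.exp (2*K*s) * (x s ⬝ᵥ x s)
        ≤ Real.exp (2*K*t) * (x t ⬝ᵥ x t)
          + (1/ε) * ∫ s in Set.Ici t, Real.exp (2*K*s) * (b s ⬝ᵥ b s) := by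
  have hdissForm : ∀ᵐ s ∂volume.restrict (Set.Ici t), ∀ v,
      dotProductForm (Fin n) (A s *ᵥ v) v ≤ -κ * dotProductForm (Fin n) v v :=
    hdiss.mono fun s hs v =>
      show (A s *ᵥ v) ⬝ᵥ v ≤ -κ * (v ⬝ᵥ v) by
        linarith [add_transpose_mulVec_dotProduct_self (A s) v ▸ hs v]
  exact (stmt_1_general _ isPosSemidef_dotProductForm hK hdissForm hbL2 hint hx).imp_right
    fun h ε hε _ => h ε hε
end

section
/- Let n ∈ ℕ, t ≥ 0, K ∈ ℝ and L ≥ 0. Let A : [t,∞) → ℝ^{n×n} be measurable with operator norm ‖A(s)‖ ≤ L for almost every s, let b : [t,∞) → ℝ^n be measurable, and let x : [t,∞) → ℝ^n be locally absolutely continuous with x'(s) = A(s)x(s) + b(s) for almost every s ≥ t. If x ∈ L^{2,K}(t,∞;ℝ^n) and b ∈ L^{2,K}(t,∞;ℝ^n), then lim_{s→∞} e^{Ks} x(s) = 0. -/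
open MeasureTheory Matrix

/-! A function controls itself over a unit window: `‖y s‖ ≤ ∫_s^{s+1} (‖y‖ + ‖y'‖)`, by averaging
`y s = y r - ∫_s^r y'` over `r`. The weight `e^{Ks}` varies at most by the factor `e^{|K|}` over the
window, so it can be moved under the integral without differentiating `e^{Ks} y`. If `e^{Ks} y` and
`e^{Ks} y'` are in `L^p`, Jensen's inequality bounds the window integrals by tails of `L^p` norms,
which vanish at infinity. For `y' = A y + b` the growth bound on `A` puts `e^{Ks} y'` in `L^p`. -/

section

open Set Filter Topology ENNReal

variable {E : Type*} [NormedAddCommGroup E]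

theorem locallyIntegrableOn_Ici_of_forall_integrableOn_Icc {f : ℝ → E} {t : ℝ} {μ : Measure ℝ}
    (hf : ∀ T, t ≤ T → IntegrableOn f (Icc t T) μ) : LocallyIntegrableOn f (Ici t) μ := by
  rw [locallyIntegrableOn_iff isClosed_Ici.isLocallyClosed]
  intro k hkt hk
  obtain ⟨T, hT⟩ := hk.bddAbove
  exact (hf (max t T) (le_max_left t T)).mono_set fun s hs =>
    ⟨hkt hs, (hT hs).trans (le_max_right t T)⟩

theorem tendsto_lpNorm_restrict_Ici_atTop {f : ℝ → E} {t : ℝ} {p : ℝ≥0∞} {μ : Measure ℝ}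
    (hp : p ≠ ∞) (hf : MemLp f p (μ.restrict (Ici t))) :
    Tendsto (fun s => lpNorm f p (μ.restrict (Ici s))) atTop (𝓝 0) := by
  rcases eq_or_ne p 0 with rfl | hp₀
  · simp
  have hpow : IntegrableOn (fun s => ‖f s‖ ^ p.toReal) (Ici t) μ := hf.integrable_norm_rpow hp₀ hp
  have htail : Tendsto (fun s => ∫ r in Ici s, ‖f r‖ ^ p.toReal ∂μ) atTop (𝓝 0) := by
    have h := tendsto_setIntegral_of_antitone (fun s => measurableSet_Ici) antitone_Ici ⟨t, hpow⟩
    have hempty : ⋂ s : ℝ, Ici s = ∅ := iInter_eq_empty_iff.2 fun r => ⟨r + 1, by simp⟩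
    rwa [hempty, setIntegral_empty] at h
  have hq : 0 < p.toReal⁻¹ := inv_pos.2 (toReal_pos hp₀ hp)
  have hroot := htail.rpow_const (p := p.toReal⁻¹) (Or.inr hq.le)
  rw [Real.zero_rpow hq.ne'] at hroot
  refine hroot.congr' ?_
  filter_upwards [eventually_ge_atTop t] with s hs
  have hfs := hf.mono_measure (Measure.restrict_mono_set μ (Ici_subset_Ici.2 hs))
  exact (lpNorm_eq_integral_norm_rpow_toReal hp₀ hp hfs.aestronglyMeasurable).symm

theorem integral_norm_le_lpNorm_restrict_Ici {f : ℝ → E} {s : ℝ} {p : ℝ≥0∞} (hp : 1 ≤ p)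
    (hf : MemLp f p (volume.restrict (Ici s))) :
    ∫ r in s..s + 1, ‖f r‖ ≤ lpNorm f p (volume.restrict (Ici s)) := by
  have hprob : IsProbabilityMeasure (volume.restrict (Ioc s (s + 1))) := ⟨by simp⟩
  have hle : volume.restrict (Ioc s (s + 1)) ≤ volume.restrict (Ici s) :=
    Measure.restrict_mono_set volume fun r hr => hr.1.le
  have hmeas := hf.aestronglyMeasurable.mono_measure hle
  rw [intervalIntegral.integral_of_le (by simp), ← lpNorm_one_eq_integral_norm hmeas,
    ← toReal_eLpNorm hmeas, ← toReal_eLpNorm hf.aestronglyMeasurable]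
  exact toReal_mono hf.eLpNorm_ne_top
    ((eLpNorm_le_eLpNorm_of_exponent_le hp hmeas).trans (eLpNorm_mono_measure f hle))

theorem tendsto_integral_norm_add_one_of_memLp {f : ℝ → E} {t : ℝ} {p : ℝ≥0∞} (hp₁ : 1 ≤ p)
    (hp : p ≠ ∞) (hf : MemLp f p (volume.restrict (Ici t))) :
    Tendsto (fun s => ∫ r in s..s + 1, ‖f r‖) atTop (𝓝 0) := by
  refine squeeze_zero' ?_ ?_ (tendsto_lpNorm_restrict_Ici_atTop hp hf)
  · exact .of_forall fun s =>
      intervalIntegral.integral_nonneg (by simp) fun r _ => norm_nonneg (f r)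
  · filter_upwards [eventually_ge_atTop t] with s hs
    exact integral_norm_le_lpNorm_restrict_Ici hp₁
      (hf.mono_measure (Measure.restrict_mono_set volume (Ici_subset_Ici.2 hs)))

variable [NormedSpace ℝ E]

/-- Membership in the weighted space `L^{p,K}(t, ∞; E)`, normed by `(∫_t^∞ e^{pKs} ‖f s‖^p)^{1/p}`
for `p < ∞`, expressed as membership of `e^{Ks} f(s)` in the unweighted space. -/
def MemExpWeightedLp (f : ℝ → E) (p : ℝ≥0∞) (K t : ℝ) : Prop :=
  MemLp (fun s => Real.exp (K * s) • f s) p (volume.restrict (Ici t))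

theorem exp_mul_integral_norm_le {f : ℝ → E} {s : ℝ} (K : ℝ)
    (hf : IntervalIntegrable f volume s (s + 1)) :
    Real.exp (K * s) * ∫ r in s..s + 1, ‖f r‖ ≤
      Real.exp |K| * ∫ r in s..s + 1, ‖Real.exp (K * r) • f r‖ := by
  have hweight : Continuous fun r => Real.exp (K * r) := by fun_prop
  rw [← intervalIntegral.integral_const_mul, ← intervalIntegral.integral_const_mul]
  refine intervalIntegral.integral_mono_on (by simp) (hf.norm.const_mul _)
    ((hf.continuousOn_smul hweight.continuousOn).norm.const_mul _) fun r hr => ?_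
  have hexp : Real.exp (K * s) ≤ Real.exp |K| * Real.exp (K * r) := by
    rw [← Real.exp_add, Real.exp_le_exp]
    have : K * (s - r) ≤ |K| * 1 :=
      calc K * (s - r) ≤ |K| * |s - r| := (le_abs_self _).trans_eq (abs_mul _ _)
        _ ≤ |K| * 1 := by
          gcongr
          exact abs_le.2 ⟨by linarith [hr.2], by linarith [hr.1]⟩
    linarith
  rw [norm_smul, Real.norm_of_nonneg (Real.exp_nonneg _), ← mul_assoc]
  gcongr

/-- `y` is a primitive of `g` on `[t, ∞)`: it is locally absolutely continuous there and `y' = g`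
almost everywhere, encoded by the integral equation. The notion is meant for complete `E`: otherwise
the Bochner integral has the junk value `0`. -/
structure IsPrimitiveOnIci (g y : ℝ → E) (t : ℝ) : Prop where
  locallyIntegrableOn_deriv : LocallyIntegrableOn g (Ici t)
  eq_add_integral : ∀ s, t ≤ s → y s = y t + ∫ r in t..s, g r

namespace IsPrimitiveOnIci

variable {g y : ℝ → E} {t : ℝ}

theorem intervalIntegrable_deriv (h : IsPrimitiveOnIci g y t) {r s : ℝ} (hr : t ≤ r)
    (hs : t ≤ s) : IntervalIntegrable g volume r s :=
  (h.locallyIntegrableOn_deriv.integrableOn_compact_subset (fun _ hu => (le_min hr hs).trans hu.1)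
    isCompact_uIcc).intervalIntegrable

theorem sub_eq_integral (h : IsPrimitiveOnIci g y t) {r s : ℝ} (hr : t ≤ r) (hs : t ≤ s) :
    y s - y r = ∫ u in r..s, g u := by
  rw [h.eq_add_integral s hs, h.eq_add_integral r hr, add_sub_add_left_eq_sub,
    intervalIntegral.integral_interval_sub_left (h.intervalIntegrable_deriv le_rfl hs)
      (h.intervalIntegrable_deriv le_rfl hr)]

theorem continuousOn (h : IsPrimitiveOnIci g y t) : ContinuousOn y (Ici t) := by
  have hIcc (T : ℝ) (hT : t ≤ T) : ContinuousOn y (Icc t T) := by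
    have hcont := intervalIntegral.continuousOn_primitive_interval'
      (h.intervalIntegrable_deriv le_rfl hT) left_mem_uIcc
    rw [uIcc_of_le hT] at hcont
    exact (hcont.const_add (y t)).congr fun s hs => h.eq_add_integral s hs.1
  intro s hs
  have hs₁ : s ≤ s + 1 := by simp
  exact (hIcc (s + 1) (hs.trans hs₁) s ⟨hs, hs₁⟩).mono_of_mem_nhdsWithin
    (inter_mem_nhdsWithin (Ici t) (Iic_mem_nhds (lt_add_one s)))

theorem norm_le_norm_add_integral (h : IsPrimitiveOnIci g y t) {s r T : ℝ} (hs : t ≤ s)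
    (hr : r ∈ Icc s T) : ‖y s‖ ≤ ‖y r‖ + ∫ u in s..T, ‖g u‖ := by
  have htr := hs.trans hr.1
  calc ‖y s‖ ≤ ‖y r‖ + ‖y r - y s‖ := norm_le_norm_add_norm_sub _ _
    _ = ‖y r‖ + ‖∫ u in s..r, g u‖ := by rw [h.sub_eq_integral hs htr]
    _ ≤ ‖y r‖ + ∫ u in s..r, ‖g u‖ := by
      gcongr
      exact intervalIntegral.norm_integral_le_integral_norm hr.1
    _ ≤ ‖y r‖ + ∫ u in s..T, ‖g u‖ := by
      gcongr
      have hg := (h.intervalIntegrable_deriv hs (htr.trans hr.2)).norm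
      exact intervalIntegral.integral_mono_interval le_rfl hr.1 hr.2
        (.of_forall fun u => norm_nonneg (g u)) hg

theorem intervalIntegrable (h : IsPrimitiveOnIci g y t) {r s : ℝ} (hr : t ≤ r) (hs : t ≤ s) :
    IntervalIntegrable y volume r s :=
  (h.continuousOn.mono fun _ hu => (le_min hr hs).trans hu.1).intervalIntegrable

theorem norm_le_integral_add_integral (h : IsPrimitiveOnIci g y t) {s : ℝ} (hs : t ≤ s) :
    ‖y s‖ ≤ (∫ r in s..s + 1, ‖y r‖) + ∫ r in s..s + 1, ‖g r‖ := by
  have hs₁ : s ≤ s + 1 := by simp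
  have hy : IntervalIntegrable (fun r => ‖y r‖) volume s (s + 1) :=
    (h.intervalIntegrable hs (hs.trans hs₁)).norm
  calc ‖y s‖ = ∫ _ in s..s + 1, ‖y s‖ := by simp
    _ ≤ ∫ r in s..s + 1, (‖y r‖ + ∫ u in s..s + 1, ‖g u‖) :=
      intervalIntegral.integral_mono_on hs₁ (by simp) (hy.add (by simp)) fun r hr =>
        h.norm_le_norm_add_integral hs hr
    _ = (∫ r in s..s + 1, ‖y r‖) + ∫ r in s..s + 1, ‖g r‖ := by
      rw [intervalIntegral.integral_add hy (by simp)]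
      simp

theorem tendsto_exp_smul_zero (h : IsPrimitiveOnIci g y t) {p : ℝ≥0∞} {K : ℝ} (hp₁ : 1 ≤ p)
    (hp : p ≠ ∞) (hy : MemExpWeightedLp y p K t) (hg : MemExpWeightedLp g p K t) :
    Tendsto (fun s => Real.exp (K * s) • y s) atTop (𝓝 0) := by
  have hwindow := ((tendsto_integral_norm_add_one_of_memLp hp₁ hp hy).add
    (tendsto_integral_norm_add_one_of_memLp hp₁ hp hg)).const_mul (Real.exp |K|)
  rw [add_zero, mul_zero] at hwindow
  refine squeeze_zero_norm' ?_ hwindow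
  filter_upwards [eventually_ge_atTop t] with s hs
  have hs₁ : t ≤ s + 1 := hs.trans (by simp)
  rw [norm_smul, Real.norm_of_nonneg (Real.exp_nonneg _)]
  calc Real.exp (K * s) * ‖y s‖
      ≤ Real.exp (K * s) * ((∫ r in s..s + 1, ‖y r‖) + ∫ r in s..s + 1, ‖g r‖) := by
        gcongr
        exact h.norm_le_integral_add_integral hs
    _ ≤ Real.exp |K| * ((∫ r in s..s + 1, ‖Real.exp (K * r) • y r‖) +
          ∫ r in s..s + 1, ‖Real.exp (K * r) • g r‖) := by
        rw [mul_add, mul_add]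
        exact add_le_add (exp_mul_integral_norm_le K (h.intervalIntegrable hs hs₁))
          (exp_mul_integral_norm_le K (h.intervalIntegrable_deriv hs hs₁))

end IsPrimitiveOnIci

theorem memExpWeightedLp_add_of_norm_le {f b x : ℝ → E} {p : ℝ≥0∞} {K L t : ℝ}
    (hmeas : AEStronglyMeasurable (fun s => f s + b s) (volume.restrict (Ici t)))
    (hf : ∀ᵐ s ∂volume.restrict (Ici t), ‖f s‖ ≤ L * ‖x s‖)
    (hx : MemExpWeightedLp x p K t) (hb : MemExpWeightedLp b p K t) :
    MemExpWeightedLp (fun s => f s + b s) p K t := by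
  have hweight : Continuous fun s => Real.exp (K * s) := by fun_prop
  refine ((hx.norm.const_mul L).add hb.norm).mono' (hweight.aestronglyMeasurable.smul hmeas) ?_
  filter_upwards [hf] with s hs
  simp only [Pi.add_apply, norm_smul, Real.norm_of_nonneg (Real.exp_nonneg _)]
  calc Real.exp (K * s) * ‖f s + b s‖
      ≤ Real.exp (K * s) * (L * ‖x s‖ + ‖b s‖) := by
        gcongr
        exact (norm_add_le _ _).trans (by gcongr)
    _ = L * (Real.exp (K * s) * ‖x s‖) + Real.exp (K * s) * ‖b s‖ := by ring

theorem stmt_2_general [CompleteSpace E] {p : ℝ≥0∞} (hp₁ : 1 ≤ p) (hp : p ≠ ∞) {t K L : ℝ}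
    {F : ℝ → E → E} {b x : ℝ → E}
    (hF : ∀ᵐ s ∂volume.restrict (Ici t), ∀ v, ‖F s v‖ ≤ L * ‖v‖)
    (hx : IsPrimitiveOnIci (fun s => F s (x s) + b s) x t)
    (hxLp : MemExpWeightedLp x p K t) (hbLp : MemExpWeightedLp b p K t) :
    Tendsto (fun s => Real.exp (K * s) • x s) atTop (𝓝 0) :=
  hx.tendsto_exp_smul_zero hp₁ hp hxLp <|
    memExpWeightedLp_add_of_norm_le hx.locallyIntegrableOn_deriv.aestronglyMeasurable
      (hF.mono fun s hs => hs (x s)) hxLp hbLp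

section EuclideanNorm

variable {ι κ : Type*} [Fintype ι] [Fintype κ]

theorem sq_norm_le_dotProduct_self (v : ι → ℝ) : ‖v‖ ^ 2 ≤ v ⬝ᵥ v := by
  have hv : 0 ≤ v ⬝ᵥ v := dotProduct_self_star_nonneg v
  rw [← Real.le_sqrt (norm_nonneg v) hv, pi_norm_le_iff_of_nonneg (Real.sqrt_nonneg _)]
  intro i
  refine Real.abs_le_sqrt ?_
  rw [sq]
  exact Finset.single_le_sum (f := fun j => v j * v j) (fun j _ => mul_self_nonneg _)
    (Finset.mem_univ i)

theorem dotProduct_self_le_card_mul_sq_norm (v : ι → ℝ) :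
    v ⬝ᵥ v ≤ Fintype.card ι * ‖v‖ ^ 2 := by
  rw [← nsmul_eq_mul]
  refine Finset.sum_le_card_nsmul _ _ _ fun i _ => ?_
  rw [← sq, ← sq_abs]
  gcongr
  exact norm_le_pi_norm v i

theorem norm_le_of_dotProduct_self_le {v : ι → ℝ} {w : κ → ℝ} {c : ℝ}
    (h : w ⬝ᵥ w ≤ c * (v ⬝ᵥ v)) (hc : 0 ≤ c) : ‖w‖ ≤ √(c * Fintype.card ι) * ‖v‖ := by
  refine le_of_sq_le_sq ?_ (by positivity)
  calc ‖w‖ ^ 2 ≤ c * (v ⬝ᵥ v) := (sq_norm_le_dotProduct_self w).trans h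
    _ ≤ c * (Fintype.card ι * ‖v‖ ^ 2) := by
      gcongr
      exact dotProduct_self_le_card_mul_sq_norm v
    _ = (√(c * Fintype.card ι) * ‖v‖) ^ 2 := by
      rw [mul_pow, Real.sq_sqrt (by positivity), mul_assoc]

theorem memExpWeightedLp_two_of_integrableOn_dotProduct_self {f : ℝ → ι → ℝ} {K t : ℝ}
    (hmeas : AEStronglyMeasurable f (volume.restrict (Ici t)))
    (hf : IntegrableOn (fun s => Real.exp (2 * K * s) * (f s ⬝ᵥ f s)) (Ici t)) :
    MemExpWeightedLp f 2 K t := by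
  have hweight : Continuous fun s => Real.exp (K * s) := by fun_prop
  have hmeas' := hweight.aestronglyMeasurable.smul hmeas
  refine (memLp_two_iff_integrable_sq_norm hmeas').2 (hf.mono' (hmeas'.norm.pow 2) ?_)
  refine .of_forall fun s => ?_
  have hsq : Real.exp (K * s) ^ 2 = Real.exp (2 * K * s) := by
    rw [← Real.exp_nat_mul, Nat.cast_ofNat, mul_assoc]
  rw [Real.norm_of_nonneg (by positivity), Pi.smul_apply', norm_smul, mul_pow,
    Real.norm_of_nonneg (Real.exp_nonneg _), hsq]
  gcongr
  exact sq_norm_le_dotProduct_self (f s)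

end EuclideanNorm

end

/-- Deterministic version of Remark 2.1: a weighted-`L²` solution of a linear
equation `x' = A x + b` with (a.e.) operator-norm-bounded coefficient `A` and
weighted-`L²` nonhomogeneous term `b` satisfies `e^{Ks} x(s) → 0` as `s → ∞`.
The operator norm bound `‖A(s)‖ ≤ L` is expressed as
`|A(s)v|² ≤ L²|v|²` for all `v`. -/
theorem stmt_2 (n : ℕ) (t K L : ℝ) (ht : 0 ≤ t) (hL : 0 ≤ L)
    (A : ℝ → Matrix (Fin n) (Fin n) ℝ) (b x : ℝ → (Fin n → ℝ))
    (hA : ∀ i j, Measurable fun s => A s i j)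
    (hb : Measurable b)
    (hAbd : ∀ᵐ s ∂(volume.restrict (Set.Ici t)),
      ∀ v : Fin n → ℝ, (A s *ᵥ v) ⬝ᵥ (A s *ᵥ v) ≤ L^2 * (v ⬝ᵥ v))
    (hint : ∀ T, t ≤ T → IntegrableOn (fun s => A s *ᵥ x s + b s) (Set.Icc t T))
    (hx : ∀ s, t ≤ s → x s = x t + ∫ r in t..s, (A r *ᵥ x r + b r))
    (hxL2 : IntegrableOn (fun s => Real.exp (2*K*s) * (x s ⬝ᵥ x s)) (Set.Ici t))
    (hbL2 : IntegrableOn (fun s => Real.exp (2*K*s) * (b s ⬝ᵥ b s)) (Set.Ici t)) :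
    Filter.Tendsto (fun s => Real.exp (K*s) • x s) Filter.atTop (nhds 0) := by
  have hprim : IsPrimitiveOnIci (fun s => A s *ᵥ x s + b s) x t :=
    ⟨locallyIntegrableOn_Ici_of_forall_integrableOn_Icc hint, hx⟩
  exact stmt_2_general one_le_two ENNReal.ofNat_ne_top
    (hAbd.mono fun s hs v => norm_le_of_dotProduct_self_le (hs v) (sq_nonneg L)) hprim
    (memExpWeightedLp_two_of_integrableOn_dotProduct_self
      (hprim.continuousOn.aestronglyMeasurable measurableSet_Ici) hxL2)
    (memExpWeightedLp_two_of_integrableOn_dotProduct_self hb.aestronglyMeasurable hbL2)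
end

section
/- Let n ∈ ℕ, t ≥ 0, K ∈ ℝ, and let A : [t,∞) → ℝ^{n×n} be measurable with uniformly bounded operator norm. Let β, f : [t,∞) → ℝ^n be measurable, and let x, y : [t,∞) → ℝ^n be locally absolutely continuous with x'(s) = A(s)x(s) + β(s) and y'(s) = −((2K)I + A(s))ᵀ y(s) − f(s) for almost every s ≥ t. Assume x, y, β, f ∈ L^{2,K}(t,∞;ℝ^n) and lim_{T→∞} e^{2KT} ⟨x(T), y(T)⟩ = 0. Then ∫_t^∞ e^{2Ks} ⟨x(s), f(s)⟩ ds = e^{2Kt} ⟨x(t), y(t)⟩ + ∫_t^∞ e^{2Ks} ⟨β(s), y(s)⟩ ds, both integrals being absolutely convergent. -/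
open MeasureTheory Matrix

/-! The scalar `F s = exp (2 K s) * ⟨x s, y s⟩` is locally absolutely continuous, and the terms in
`A` and `K` cancel in its derivative, leaving `exp (2 K s) * (⟨β s, y s⟩ - ⟨x s, f s⟩)`.
Since `|⟨u, v⟩| ≤ |u|² + |v|²`, both `F` and `F'` are integrable on `[t, ∞)`. Hence `F` has a limit
at infinity, this limit is `0`, and `∫ F' = -F t` is the duality identity. -/

theorem absolutelyContinuousOnInterval_congr {X : Type*} [PseudoMetricSpace X] {u v : ℝ → X}
    {a b : ℝ} (huv : Set.EqOn u v (Set.uIcc a b)) (hu : AbsolutelyContinuousOnInterval u a b) :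
    AbsolutelyContinuousOnInterval v a b := by
  refine Filter.Tendsto.congr' ?_ hu
  refine Filter.eventually_inf_principal.2 (.of_forall fun I hI => ?_)
  refine Finset.sum_congr rfl fun i hi => ?_
  obtain ⟨hleft, hright⟩ := hI.1 i hi
  rw [huv hleft, huv hright]

/-- The function `x` is locally absolutely continuous on `[t, ∞)` with almost everywhere derivative
`g`. This is encoded by the integral equation, so that no pointwise derivative appears. -/
structure IsPrimitiveOnIci_s6 {E : Type*} [NormedAddCommGroup E] [NormedSpace ℝ E]
    (t : ℝ) (x g : ℝ → E) : Prop where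
  integrableOn_Icc : ∀ T, t ≤ T → IntegrableOn g (Set.Icc t T)
  eq_add_integral : ∀ s, t ≤ s → x s = x t + ∫ r in t..s, g r

namespace IsPrimitiveOnIci_s6

section NormedSpace

variable {E : Type*} [NormedAddCommGroup E] [NormedSpace ℝ E] {t T : ℝ} {x g : ℝ → E}

theorem intervalIntegrable_s6 (h : IsPrimitiveOnIci_s6 t x g) (hT : t ≤ T) :
    IntervalIntegrable g volume t T :=
  (intervalIntegrable_iff_integrableOn_Icc_of_le hT).2 (h.integrableOn_Icc T hT)

theorem eqOn (h : IsPrimitiveOnIci_s6 t x g) :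
    Set.EqOn x (fun s => x t + ∫ r in t..s, g r) (Set.Ici t) :=
  h.eq_add_integral

theorem continuousOn_s6 (h : IsPrimitiveOnIci_s6 t x g) : ContinuousOn x (Set.Ici t) := by
  intro s hs
  have ht : t ≤ s + 1 := by linarith [Set.mem_Ici.1 hs]
  have hprim : ContinuousOn (fun r => ∫ u in t..r, g u) (Set.Icc t (s + 1)) := by
    simpa only [Set.uIcc_of_le ht] using
      intervalIntegral.continuousOn_primitive_interval'
        (h.intervalIntegrable_s6 ht) Set.left_mem_uIcc
  have hx : ContinuousOn x (Set.Icc t (s + 1)) :=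
    (continuousOn_const.add hprim).congr (h.eqOn.mono Set.Icc_subset_Ici_self)
  refine (hx s ⟨hs, by linarith⟩).mono_of_mem_nhdsWithin ?_
  rw [← Set.Ici_inter_Iic]
  exact inter_mem_nhdsWithin _ (Iic_mem_nhds (by linarith))

theorem ae_hasDerivAt [CompleteSpace E] (h : IsPrimitiveOnIci_s6 t x g) :
    ∀ᵐ s, t < s → HasDerivAt x (g s) s := by
  have hprim : ∀ᵐ s, ∀ n : ℕ, s ∈ Set.uIcc t (t + n) →
      HasDerivAt (fun r => ∫ u in t..r, g u) (g s) s := by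
    refine ae_all_iff.2 fun n => ?_
    have hn : t ≤ t + n := by simp
    filter_upwards [(h.intervalIntegrable_s6 hn).ae_hasDerivAt_integral] with s hs hmem
    exact hs hmem t Set.left_mem_uIcc
  filter_upwards [hprim] with s hs hts
  obtain ⟨n, hn⟩ := exists_nat_ge (s - t)
  have hmem : s ∈ Set.uIcc t (t + n) := Set.mem_uIcc_of_le hts.le (by linarith)
  exact ((hs n hmem).const_add (x t)).congr_of_eventuallyEq
    (h.eqOn.eventuallyEq_of_mem (Ici_mem_nhds hts))

theorem tendsto_atTop (h : IsPrimitiveOnIci_s6 t x g) (hg : IntegrableOn g (Set.Ici t)) :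
    Filter.Tendsto x Filter.atTop (nhds (x t + ∫ s in Set.Ici t, g s)) := by
  rw [integral_Ici_eq_integral_Ioi]
  refine ((intervalIntegral_tendsto_integral_Ioi t (hg.mono_set Set.Ioi_subset_Ici_self)
    Filter.tendsto_id).const_add (x t)).congr' ?_
  exact (h.eqOn.eventuallyEq_of_mem (Filter.Ici_mem_atTop t)).symm

theorem integral_Ici_eq_neg (h : IsPrimitiveOnIci_s6 t x g) (hx : IntegrableOn x (Set.Ici t))
    (hg : IntegrableOn g (Set.Ici t)) : ∫ s in Set.Ici t, g s = -x t := by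
  have hlim : x t + ∫ s in Set.Ici t, g s = 0 := by
    refine IntegrableAtFilter.eq_zero_of_tendsto ⟨Set.Ici t, Filter.Ici_mem_atTop t, hx⟩
      (fun s hs => ?_) (h.tendsto_atTop hg)
    obtain ⟨a, ha⟩ := Filter.mem_atTop_sets.1 hs
    exact measure_mono_top ha Real.volume_Ici
  exact eq_neg_of_add_eq_zero_right hlim

theorem finset_sum {ι : Type*} (S : Finset ι) {u u' : ι → ℝ → E}
    (h : ∀ i ∈ S, IsPrimitiveOnIci_s6 t (u i) (u' i)) :
    IsPrimitiveOnIci_s6 t (fun s => ∑ i ∈ S, u i s) (fun s => ∑ i ∈ S, u' i s) where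
  integrableOn_Icc T hT := integrable_finsetSum _ fun i hi => (h i hi).integrableOn_Icc T hT
  eq_add_integral s hs := by
    rw [intervalIntegral.integral_finsetSum fun i hi => (h i hi).intervalIntegrable_s6 hs,
      ← Finset.sum_add_distrib]
    exact Finset.sum_congr rfl fun i hi => (h i hi).eq_add_integral s hs

end NormedSpace

section Real

variable {t T : ℝ} {u v u' v' : ℝ → ℝ}

theorem absolutelyContinuousOnInterval (h : IsPrimitiveOnIci_s6 t u u') (hT : t ≤ T) :
    AbsolutelyContinuousOnInterval u t T := by
  have hconst : AbsolutelyContinuousOnInterval (fun _ => u t) t T :=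
    contDiff_const.contDiffOn.absolutelyContinuousOnInterval
  have hprim : AbsolutelyContinuousOnInterval (fun s => ∫ r in t..s, u' r) t T :=
    (h.intervalIntegrable_s6 hT).absolutelyContinuousOnInterval_intervalIntegral Set.left_mem_uIcc
  refine absolutelyContinuousOnInterval_congr (h.eqOn.symm.mono ?_) (hconst.fun_add hprim)
  rw [Set.uIcc_of_le hT]
  exact Set.Icc_subset_Ici_self

theorem of_ae_hasDerivAt (hac : ∀ T, t ≤ T → AbsolutelyContinuousOnInterval u t T)
    (hderiv : ∀ᵐ s, t < s → HasDerivAt u (u' s) s) : IsPrimitiveOnIci_s6 t u u' := by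
  have hae (T : ℝ) (hT : t ≤ T) : ∀ᵐ s, s ∈ Set.uIoc t T → deriv u s = u' s := by
    filter_upwards [hderiv] with s hs hmem
    rw [Set.uIoc_of_le hT] at hmem
    exact (hs hmem.1).deriv
  refine ⟨fun T hT => ?_, fun T hT => ?_⟩
  · rw [← intervalIntegrable_iff_integrableOn_Icc_of_le hT]
    exact (hac T hT).intervalIntegrable_deriv.congr_ae
      ((ae_restrict_iff' measurableSet_uIoc).2 (hae T hT))
  · rw [← intervalIntegral.integral_congr_ae (hae T hT), (hac T hT).integral_deriv_eq_sub,
      add_sub_cancel]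

theorem mul (hu : IsPrimitiveOnIci_s6 t u u') (hv : IsPrimitiveOnIci_s6 t v v') :
    IsPrimitiveOnIci_s6 t (fun s => u s * v s) (fun s => u' s * v s + u s * v' s) := by
  refine of_ae_hasDerivAt (fun T hT => (hu.absolutelyContinuousOnInterval hT).fun_mul
    (hv.absolutelyContinuousOnInterval hT)) ?_
  filter_upwards [hu.ae_hasDerivAt, hv.ae_hasDerivAt] with s hus hvs hts
  exact (hus hts).mul (hvs hts)

theorem exp_const_mul (c : ℝ) :
    IsPrimitiveOnIci_s6 t (fun s => Real.exp (c * s)) (fun s => c * Real.exp (c * s)) := by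
  have hderiv (s : ℝ) : HasDerivAt (fun r => Real.exp (c * r)) (c * Real.exp (c * s)) s := by
    simpa [mul_comm] using ((hasDerivAt_id s).const_mul c).exp
  have hsmooth : ContDiff ℝ 1 fun s => Real.exp (c * s) := by fun_prop
  exact of_ae_hasDerivAt (fun _ _ => hsmooth.contDiffOn.absolutelyContinuousOnInterval)
    (.of_forall fun s _ => hderiv s)

end Real

section Pi

variable {ι : Type*} [Fintype ι] {t : ℝ}

theorem eval {E : ι → Type*} [∀ i, NormedAddCommGroup (E i)] [∀ i, NormedSpace ℝ (E i)]
    [∀ i, CompleteSpace (E i)] {x g : ℝ → ∀ i, E i} (hx : IsPrimitiveOnIci_s6 t x g) (i : ι) :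
    IsPrimitiveOnIci_s6 t (fun s => x s i) (fun s => g s i) where
  integrableOn_Icc T hT := (hx.integrableOn_Icc T hT).eval i
  eq_add_integral s hs := by
    rw [hx.eq_add_integral s hs, Pi.add_apply, intervalIntegral.integral_of_le hs,
      intervalIntegral.integral_of_le hs,
      eval_integral fun j => (hx.intervalIntegrable_s6 hs).1.eval j]

theorem dotProduct {x y g h : ℝ → ι → ℝ} (hx : IsPrimitiveOnIci_s6 t x g)
    (hy : IsPrimitiveOnIci_s6 t y h) :
    IsPrimitiveOnIci_s6 t (fun s => x s ⬝ᵥ y s) (fun s => g s ⬝ᵥ y s + x s ⬝ᵥ h s) := by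
  simpa only [_root_.dotProduct, Finset.sum_add_distrib] using
    finset_sum Finset.univ fun i _ => (hx.eval i).mul (hy.eval i)

end Pi

end IsPrimitiveOnIci_s6

theorem abs_dotProduct_le_add_dotProduct_self {ι : Type*} [Fintype ι] (u v : ι → ℝ) :
    |u ⬝ᵥ v| ≤ u ⬝ᵥ u + v ⬝ᵥ v := by
  simp only [dotProduct, ← Finset.sum_add_distrib]
  refine (Finset.abs_sum_le_sum_abs _ _).trans (Finset.sum_le_sum fun i _ => ?_)
  rw [abs_mul, ← abs_mul_abs_self (u i), ← abs_mul_abs_self (v i)]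
  nlinarith [sq_nonneg (|u i| - |v i|), abs_nonneg (u i), abs_nonneg (v i)]

theorem integrable_mul_dotProduct {α ι : Type*} [Fintype ι] [MeasurableSpace α]
    {μ : Measure α} {w : α → ℝ} {u v : α → ι → ℝ} (hw : 0 ≤ᵐ[μ] w)
    (hwm : AEStronglyMeasurable w μ) (hum : AEStronglyMeasurable u μ)
    (hvm : AEStronglyMeasurable v μ) (hu : Integrable (fun a => w a * (u a ⬝ᵥ u a)) μ)
    (hv : Integrable (fun a => w a * (v a ⬝ᵥ v a)) μ) :
    Integrable (fun a => w a * (u a ⬝ᵥ v a)) μ := by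
  have hdot : Continuous fun p : (ι → ℝ) × (ι → ℝ) => p.1 ⬝ᵥ p.2 := by fun_prop
  refine (hu.add hv).mono' (hwm.mul (hdot.comp_aestronglyMeasurable (hum.prodMk hvm))) ?_
  filter_upwards [hw] with a ha
  calc ‖w a * (u a ⬝ᵥ v a)‖ = w a * |u a ⬝ᵥ v a| := by
        rw [norm_mul, Real.norm_of_nonneg ha, Real.norm_eq_abs]
    _ ≤ w a * (u a ⬝ᵥ u a + v a ⬝ᵥ v a) :=
        mul_le_mul_of_nonneg_left (abs_dotProduct_le_add_dotProduct_self _ _) ha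
    _ = w a * (u a ⬝ᵥ u a) + w a * (v a ⬝ᵥ v a) := mul_add _ _ _

theorem mulVec_add_dotProduct_add_dotProduct_adjoint {ι R : Type*} [Fintype ι]
    [DecidableEq ι] [CommRing R] (A : Matrix ι ι R) (c : R) (b f x y : ι → R) :
    (A *ᵥ x + b) ⬝ᵥ y + x ⬝ᵥ (-((c • (1 : Matrix ι ι R) + A)ᵀ *ᵥ y) - f) =
      b ⬝ᵥ y - x ⬝ᵥ f - c * (x ⬝ᵥ y) := by
  have hadj : x ⬝ᵥ (Aᵀ *ᵥ y) = (A *ᵥ x) ⬝ᵥ y := by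
    rw [dotProduct_mulVec, vecMul_transpose]
  simp only [transpose_add, transpose_smul, transpose_one, add_mulVec, smul_mulVec, one_mulVec,
    dotProduct_sub, dotProduct_neg, dotProduct_add, dotProduct_smul, add_dotProduct, hadj,
    smul_eq_mul]
  ring

theorem isPrimitiveOnIci_exp_mul_dotProduct {ι : Type*} [Fintype ι] [DecidableEq ι] {t c : ℝ}
    {A : ℝ → Matrix ι ι ℝ} {β f x y : ℝ → ι → ℝ}
    (hx : IsPrimitiveOnIci_s6 t x fun s => A s *ᵥ x s + β s)
    (hy : IsPrimitiveOnIci_s6 t y fun s => -((c • (1 : Matrix ι ι ℝ) + A s)ᵀ *ᵥ y s) - f s) :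
    IsPrimitiveOnIci_s6 t (fun s => Real.exp (c * s) * (x s ⬝ᵥ y s))
      (fun s => Real.exp (c * s) * (β s ⬝ᵥ y s) - Real.exp (c * s) * (x s ⬝ᵥ f s)) := by
  convert (IsPrimitiveOnIci_s6.exp_const_mul c).mul (hx.dotProduct hy) using 2 with s
  rw [mulVec_add_dotProduct_add_dotProduct_adjoint]
  ring

theorem stmt_6_general {ι : Type*} [Fintype ι] [DecidableEq ι] {t K : ℝ}
    {A : ℝ → Matrix ι ι ℝ} {β f x y : ℝ → ι → ℝ}
    (hβ : AEStronglyMeasurable β (volume.restrict (Set.Ici t)))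
    (hf : AEStronglyMeasurable f (volume.restrict (Set.Ici t)))
    (hx : IsPrimitiveOnIci_s6 t x fun s => A s *ᵥ x s + β s)
    (hy : IsPrimitiveOnIci_s6 t y fun s =>
      -(((2 * K) • (1 : Matrix ι ι ℝ) + A s)ᵀ *ᵥ y s) - f s)
    (hxL2 : IntegrableOn (fun s => Real.exp (2 * K * s) * (x s ⬝ᵥ x s)) (Set.Ici t))
    (hyL2 : IntegrableOn (fun s => Real.exp (2 * K * s) * (y s ⬝ᵥ y s)) (Set.Ici t))
    (hβL2 : IntegrableOn (fun s => Real.exp (2 * K * s) * (β s ⬝ᵥ β s)) (Set.Ici t))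
    (hfL2 : IntegrableOn (fun s => Real.exp (2 * K * s) * (f s ⬝ᵥ f s)) (Set.Ici t)) :
    IntegrableOn (fun s => Real.exp (2 * K * s) * (x s ⬝ᵥ f s)) (Set.Ici t) ∧
    IntegrableOn (fun s => Real.exp (2 * K * s) * (β s ⬝ᵥ y s)) (Set.Ici t) ∧
    ∫ s in Set.Ici t, Real.exp (2 * K * s) * (x s ⬝ᵥ f s)
      = Real.exp (2 * K * t) * (x t ⬝ᵥ y t)
        + ∫ s in Set.Ici t, Real.exp (2 * K * s) * (β s ⬝ᵥ y s) := by
  have hexp : Continuous fun s => Real.exp (2 * K * s) := by fun_prop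
  have hxm := hx.continuousOn_s6.aestronglyMeasurable (μ := volume) measurableSet_Ici
  have hym := hy.continuousOn_s6.aestronglyMeasurable (μ := volume) measurableSet_Ici
  have integrableOn_dotProduct {u v : ℝ → ι → ℝ} :=
    integrable_mul_dotProduct (μ := volume.restrict (Set.Ici t)) (u := u) (v := v)
      (.of_forall fun s => (Real.exp_pos (2 * K * s)).le) hexp.aestronglyMeasurable
  have hxf := integrableOn_dotProduct hxm hf hxL2 hfL2
  have hβy := integrableOn_dotProduct hβ hym hβL2 hyL2
  have hxy := integrableOn_dotProduct hxm hym hxL2 hyL2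
  refine ⟨hxf, hβy, ?_⟩
  have hduality := (isPrimitiveOnIci_exp_mul_dotProduct hx hy).integral_Ici_eq_neg hxy
    (hβy.sub hxf)
  rw [integral_sub hβy hxf] at hduality
  linarith

/-- Deterministic infinite-horizon duality (integration-by-parts) identity
between the forward linear equation `x' = A x + β` and its adjoint backward
equation `y' = -((2K)I + A)ᵀ y - f` (used in the proof of Lemma 3.2):
`∫_t^∞ e^{2Ks}⟨x,f⟩ ds = e^{2Kt}⟨x(t),y(t)⟩ + ∫_t^∞ e^{2Ks}⟨β,y⟩ ds`,
both integrals being absolutely convergent. -/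
theorem stmt_6 (n : ℕ) (t K : ℝ) (ht : 0 ≤ t)
    (A : ℝ → Matrix (Fin n) (Fin n) ℝ)
    (β f x y : ℝ → (Fin n → ℝ))
    (hA : ∀ i j, Measurable fun s => A s i j)
    (hAbd : ∃ L : ℝ, ∀ᵐ s ∂(volume.restrict (Set.Ici t)),
      ∀ v : Fin n → ℝ, (A s *ᵥ v) ⬝ᵥ (A s *ᵥ v) ≤ L^2 * (v ⬝ᵥ v))
    (hβ : Measurable β) (hf : Measurable f)
    (hxint : ∀ T, t ≤ T → IntegrableOn (fun s => A s *ᵥ x s + β s) (Set.Icc t T))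
    (hx : ∀ s, t ≤ s → x s = x t + ∫ r in t..s, (A r *ᵥ x r + β r))
    (hyint : ∀ T, t ≤ T → IntegrableOn (fun s =>
      -((((2*K) • (1 : Matrix (Fin n) (Fin n) ℝ) + A s)ᵀ) *ᵥ y s) - f s) (Set.Icc t T))
    (hy : ∀ s, t ≤ s → y s = y t + ∫ r in t..s,
      (-((((2*K) • (1 : Matrix (Fin n) (Fin n) ℝ) + A r)ᵀ) *ᵥ y r) - f r))
    (hxL2 : IntegrableOn (fun s => Real.exp (2*K*s) * (x s ⬝ᵥ x s)) (Set.Ici t))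
    (hyL2 : IntegrableOn (fun s => Real.exp (2*K*s) * (y s ⬝ᵥ y s)) (Set.Ici t))
    (hβL2 : IntegrableOn (fun s => Real.exp (2*K*s) * (β s ⬝ᵥ β s)) (Set.Ici t))
    (hfL2 : IntegrableOn (fun s => Real.exp (2*K*s) * (f s ⬝ᵥ f s)) (Set.Ici t))
    (hlim : Filter.Tendsto (fun T => Real.exp (2*K*T) * (x T ⬝ᵥ y T))
      Filter.atTop (nhds 0)) :
    IntegrableOn (fun s => Real.exp (2*K*s) * (x s ⬝ᵥ f s)) (Set.Ici t) ∧
    IntegrableOn (fun s => Real.exp (2*K*s) * (β s ⬝ᵥ y s)) (Set.Ici t) ∧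
    ∫ s in Set.Ici t, Real.exp (2*K*s) * (x s ⬝ᵥ f s)
      = Real.exp (2*K*t) * (x t ⬝ᵥ y t)
        + ∫ s in Set.Ici t, Real.exp (2*K*s) * (β s ⬝ᵥ y s) :=
  stmt_6_general hβ.aestronglyMeasurable hf.aestronglyMeasurable ⟨hxint, hx⟩ ⟨hyint, hy⟩
    hxL2 hyL2 hβL2 hfL2
end

section
/- Let n, m ∈ ℕ, t ≥ 0, K ∈ ℝ. Let A : [t,∞) → ℝ^{n×n}, B : [t,∞) → ℝ^{n×m}, Q : [t,∞) → Sym_n(ℝ), S : [t,∞) → ℝ^{m×n}, R : [t,∞) → Sym_m(ℝ) be measurable with uniformly bounded operator norms, and suppose there is δ > 0 such that R(s) ⪰ δI_m and Q(s) − S(s)ᵀ R(s)^{-1} S(s) ⪰ 0 for almost every s. Call u ∈ L^{2,K}(t,∞;ℝ^m) admissible; for x_t ∈ ℝ^n and admissible u let x_u denote the unique locally absolutely continuous solution of x' = A x + B u on [t,∞) with x_u(t) = x_t, and assume x_u ∈ L^{2,K}(t,∞;ℝ^n) for every admissible u. Define J(u) = (1/2) ∫_t^∞ e^{2Ks} (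 ⟨Q(s)x_u(s), x_u(s)⟩ + 2⟨S(s)x_u(s), u(s)⟩ + ⟨R(s)u(s), u(s)⟩ ) ds. Let u* be admissible, x* = x_{u*}, and let y* : [t,∞) → ℝ^n be locally absolutely continuous with y*'(s) = −((2K)I + A(s))ᵀ y*(s) − Q(s)x*(s) − S(s)ᵀ u*(s) for almost every s and y* ∈ L^{2,K}(t,∞;ℝ^n). Then u* minimizes J over all admissible controls if and only if B(s)ᵀ y*(s) + S(s)x*(s) + R(s)u*(s) = 0 for almost every s ≥ t; moreover, in that case u* is the unique minimizer of J (up to almost-everywhere equality). -/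
open MeasureTheory Matrix

/-- A control `u` is admissible if it is measurable and lies in the weighted
space `L^{2,K}(t,∞;ℝ^m)`. -/
def Adm (t K : ℝ) {m : ℕ} (u : ℝ → (Fin m → ℝ)) : Prop :=
  Measurable u ∧
  MeasureTheory.IntegrableOn (fun s => Real.exp (2*K*s) * (u s ⬝ᵥ u s)) (Set.Ici t)

/-- `x` is the (locally absolutely continuous) state trajectory on `[t,∞)`
associated with the control `u`, the initial state `xt`, and the dynamics
`x' = A x + B u`. -/
def IsState (t : ℝ) {n m : ℕ} (A : ℝ → Matrix (Fin n) (Fin n) ℝ)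
    (B : ℝ → Matrix (Fin n) (Fin m) ℝ) (xt : Fin n → ℝ)
    (u : ℝ → (Fin m → ℝ)) (x : ℝ → (Fin n → ℝ)) : Prop :=
  x t = xt ∧
  (∀ T, t ≤ T →
    MeasureTheory.IntegrableOn (fun s => A s *ᵥ x s + B s *ᵥ u s) (Set.Icc t T)) ∧
  ∀ s, t ≤ s → x s = xt + ∫ r in t..s, (A r *ᵥ x r + B r *ᵥ u r)

/-- The infinite-horizon quadratic cost functional
`J(u) = (1/2)∫_t^∞ e^{2Ks}(⟨Qx,x⟩ + 2⟨Sx,u⟩ + ⟨Ru,u⟩) ds` evaluated along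
the trajectory `x`. -/
noncomputable def Jcost (t K : ℝ) {n m : ℕ} (Q : ℝ → Matrix (Fin n) (Fin n) ℝ)
    (S : ℝ → Matrix (Fin m) (Fin n) ℝ) (R : ℝ → Matrix (Fin m) (Fin m) ℝ)
    (x : ℝ → (Fin n → ℝ)) (u : ℝ → (Fin m → ℝ)) : ℝ :=
  (1/2) * ∫ s in Set.Ici t, Real.exp (2*K*s) *
    (((Q s *ᵥ x s) ⬝ᵥ x s) + 2 * ((S s *ᵥ x s) ⬝ᵥ u s) + ((R s *ᵥ u s) ⬝ᵥ u s))

/-!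
With the measure `e^{2Ks} ds` on `[t, ∞)`, the cost is a quadratic functional of the pair `(u, x)`.
Its second-order expansion at `(u*, x*)` in a direction `(v, z)` with `z t = 0` is exact.
Integrating `e^{2Ks} ⟨y*, z⟩` by parts, with no boundary term at infinity, turns the linear part
into `∫ e^{2Ks} ⟨Bᵀ y* + S x* + R u*, v⟩ ds`. Completing the square with (PD) shows that the
quadratic part, the cost of `(v, z)`, is nonnegative; if it vanishes then `v = -R⁻¹ S z` is linear
feedback, and Grönwall's inequality gives `z = 0` and `v = 0`, whence uniqueness.
-/

open scoped ENNReal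

/-- `f` is locally absolutely continuous on `[t, ∞)` with a.e. derivative `f'`, encoded as: `f'` is
locally integrable there and `f` is one of its primitives. -/
def IsPrimitiveFrom {E : Type*} [NormedAddCommGroup E] [NormedSpace ℝ E] (t : ℝ)
    (f f' : ℝ → E) : Prop :=
  (∀ T, t ≤ T → IntervalIntegrable f' volume t T) ∧
    ∀ s, t ≤ s → f s = f t + ∫ r in t..s, f' r

namespace IsPrimitiveFrom

section Vector

variable {E : Type*} [NormedAddCommGroup E] [NormedSpace ℝ E] {t : ℝ} {f f' g g' : ℝ → E}

theorem add_smul (hf : IsPrimitiveFrom t f f') (hg : IsPrimitiveFrom t g g') (c : ℝ) :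
    IsPrimitiveFrom t (f + c • g) (fun s => f' s + c • g' s) := by
  refine ⟨fun T hT => (hf.1 T hT).add ((hg.1 T hT).smul c), fun s hs => ?_⟩
  have h_int : ∫ r in t..s, (f' r + c • g' r) = (∫ r in t..s, f' r) + c • ∫ r in t..s, g' r := by
    rw [← intervalIntegral.integral_smul]
    exact intervalIntegral.integral_add (hf.1 s hs) ((hg.1 s hs).smul c)
  simp only [Pi.add_apply, Pi.smul_apply]
  rw [h_int, hf.2 s hs, hg.2 s hs, smul_add, add_add_add_comm]

theorem continuousOn_Icc (hf : IsPrimitiveFrom t f f') {T : ℝ} (hT : t ≤ T) :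
    ContinuousOn f (Set.Icc t T) := by
  have hprim := intervalIntegral.continuousOn_primitive_interval' (hf.1 T hT) Set.left_mem_uIcc
  rw [Set.uIcc_of_le hT] at hprim
  exact (continuousOn_const.add hprim).congr fun s hs => hf.2 s hs.1

theorem continuousOn (hf : IsPrimitiveFrom t f f') : ContinuousOn f (Set.Ici t) := by
  intro s (hs : t ≤ s)
  refine (hf.continuousOn_Icc (by linarith : t ≤ s + 1) s ⟨hs, by linarith⟩).mono_of_mem_nhdsWithin
    ?_
  rw [← Set.Ici_inter_Iic]
  exact Filter.inter_mem self_mem_nhdsWithin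
    (mem_nhdsWithin_of_mem_nhds (Iic_mem_nhds (by linarith)))

theorem eval {ι : Type*} [Fintype ι] {p p' : ℝ → ι → ℝ} (h : IsPrimitiveFrom t p p') (i : ι) :
    IsPrimitiveFrom t (fun s => p s i) (fun s => p' s i) := by
  let proj_i : (ι → ℝ) →L[ℝ] ℝ := ContinuousLinearMap.proj i
  refine ⟨fun T hT => ?_, fun s hs => ?_⟩
  · rw [intervalIntegrable_iff_integrableOn_Ioc_of_le hT]
    exact proj_i.integrable_comp ((intervalIntegrable_iff_integrableOn_Ioc_of_le hT).1 (h.1 T hT))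
  · have h_eval := congrArg proj_i (h.2 s hs)
    rw [map_add, ← proj_i.intervalIntegral_comp_comm (h.1 s hs)] at h_eval
    exact h_eval

end Vector

section Scalar

variable {t : ℝ} {f f' g g' : ℝ → ℝ}

theorem absolutelyContinuousOnInterval (hf : IsPrimitiveFrom t f f') {T : ℝ} (hT : t ≤ T) :
    AbsolutelyContinuousOnInterval (fun s => f t + ∫ r in t..s, f' r) t T :=
  ((LipschitzWith.const (f t)).lipschitzOnWith.absolutelyContinuousOnInterval).add
    ((hf.1 T hT).absolutelyContinuousOnInterval_intervalIntegral Set.left_mem_uIcc)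

theorem ae_deriv_eq (hf : IsPrimitiveFrom t f f') {T : ℝ} (hT : t ≤ T) :
    ∀ᵐ s, s ∈ Set.uIoc t T → deriv (fun s => f t + ∫ r in t..s, f' r) s = f' s := by
  filter_upwards [(hf.1 T hT).ae_hasDerivAt_integral] with s h hs
  exact ((h (Set.uIoc_subset_uIcc hs) t Set.left_mem_uIcc).const_add (f t)).deriv

theorem mul (hf : IsPrimitiveFrom t f f') (hg : IsPrimitiveFrom t g g') :
    IsPrimitiveFrom t (fun s => f s * g s) (fun s => f' s * g s + f s * g' s) := by
  refine ⟨fun T hT => ?_, fun T hT => ?_⟩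
  · have hsub : Set.uIcc t T ⊆ Set.Ici t := by
      rw [Set.uIcc_of_le hT]
      exact Set.Icc_subset_Ici_self
    exact ((hf.1 T hT).mul_continuousOn (hg.continuousOn.mono hsub)).add
      ((hg.1 T hT).continuousOn_mul (hf.continuousOn.mono hsub))
  · have h_parts := (hf.absolutelyContinuousOnInterval hT).integral_deriv_mul_eq_sub
      (hg.absolutelyContinuousOnInterval hT)
    rw [← hf.2 T hT, ← hg.2 T hT] at h_parts
    simp only [intervalIntegral.integral_same, add_zero] at h_parts
    rw [← sub_eq_iff_eq_add', ← h_parts]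
    refine intervalIntegral.integral_congr_ae ?_
    filter_upwards [hf.ae_deriv_eq hT, hg.ae_deriv_eq hT] with s hfs hgs hs
    have hts : t ≤ s := by
      rw [Set.uIoc_of_le hT] at hs
      exact hs.1.le
    rw [hfs hs, hgs hs, ← hf.2 s hts, ← hg.2 s hts]

theorem exp_const_mul (c : ℝ) :
    IsPrimitiveFrom t (fun s => Real.exp (c * s)) (fun s => c * Real.exp (c * s)) := by
  have hint : ∀ T, IntervalIntegrable (fun s => c * Real.exp (c * s)) volume t T :=
    fun T => Continuous.intervalIntegrable (by fun_prop) t T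
  refine ⟨fun T _ => hint T, fun T _ => ?_⟩
  rw [intervalIntegral.integral_eq_sub_of_hasDerivAt (f := fun s => Real.exp (c * s)) ?_ (hint T),
    add_sub_cancel]
  intro s _
  simpa [mul_comm] using ((hasDerivAt_id s).const_mul c).exp

theorem finsetSum {ι : Type*} (a : Finset ι) {F F' : ι → ℝ → ℝ}
    (h : ∀ i ∈ a, IsPrimitiveFrom t (F i) (F' i)) :
    IsPrimitiveFrom t (fun s => ∑ i ∈ a, F i s) (fun s => ∑ i ∈ a, F' i s) := by
  refine ⟨fun T hT => ?_, fun s hs => ?_⟩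
  · simpa only [Finset.sum_fn] using IntervalIntegrable.sum a fun i hi => (h i hi).1 T hT
  · rw [intervalIntegral.integral_finsetSum fun i hi => (h i hi).1 s hs, ← Finset.sum_add_distrib]
    exact Finset.sum_congr rfl fun i hi => (h i hi).2 s hs

theorem dotProduct {ι : Type*} [Fintype ι] {p p' q q' : ℝ → ι → ℝ}
    (hp : IsPrimitiveFrom t p p') (hq : IsPrimitiveFrom t q q') :
    IsPrimitiveFrom t (fun s => p s ⬝ᵥ q s) (fun s => p' s ⬝ᵥ q s + p s ⬝ᵥ q' s) := by
  simpa only [_root_.dotProduct, Finset.sum_add_distrib] using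
    finsetSum Finset.univ fun i _ => (hp.eval i).mul (hq.eval i)

-- An integrable `f` with integrable derivative has a limit at infinity, which can only be `0`.
theorem integral_Ici_eq_neg (hf : IsPrimitiveFrom t f f') (hf_int : IntegrableOn f (Set.Ici t))
    (hf'_int : IntegrableOn f' (Set.Ici t)) : ∫ s in Set.Ici t, f' s = -f t := by
  have h_lim : Filter.Tendsto f Filter.atTop (nhds (f t + ∫ s in Set.Ioi t, f' s)) := by
    refine ((intervalIntegral_tendsto_integral_Ioi t (hf'_int.mono_set Set.Ioi_subset_Ici_self)
      Filter.tendsto_id).const_add (f t)).congr' ?_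
    filter_upwards [Filter.eventually_ge_atTop t] with s hs
    exact (hf.2 s hs).symm
  have h_zero := IntegrableAtFilter.eq_zero_of_tendsto
    ⟨Set.Ici t, Filter.mem_atTop t, hf_int⟩ (fun s hs => ?_) h_lim
  · rw [integral_Ici_eq_integral_Ioi]
    linarith
  · obtain ⟨b, hb⟩ := Filter.mem_atTop_sets.1 hs
    rw [← top_le_iff, ← Real.volume_Ici (a := b)]
    exact measure_mono hb

-- Grönwall's inequality: `s ↦ exp (-C s) * f s` is nonincreasing.
theorem le_zero_of_deriv_le {C : ℝ} (hf : IsPrimitiveFrom t f f') (hft : f t = 0)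
    (hle : ∀ᵐ s ∂(volume.restrict (Set.Ici t)), f' s ≤ C * f s) {s : ℝ} (hs : t ≤ s) :
    f s ≤ 0 := by
  have h_prim := ((exp_const_mul (t := t) (-C)).mul hf).2 s hs
  simp only [hft, mul_zero, zero_add] at h_prim
  refine nonpos_of_mul_nonpos_right (h_prim.trans_le ?_) (Real.exp_pos (-C * s))
  rw [intervalIntegral.integral_of_le hs]
  refine integral_nonpos_of_ae ?_
  filter_upwards [ae_restrict_of_ae_restrict_of_subset
    (Set.Ioc_subset_Ioi_self.trans Set.Ioi_subset_Ici_self) hle] with r hr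
  have := mul_le_mul_of_nonneg_left hr (Real.exp_pos (-C * r)).le
  simp only [Pi.zero_apply]
  linarith

end Scalar

end IsPrimitiveFrom

section DotProduct

variable {ι κ : Type*} [Fintype ι] [Fintype κ]

theorem dotProduct_self_nonneg (a : ι → ℝ) : 0 ≤ a ⬝ᵥ a := dotProduct_star_self_nonneg a

theorem two_mul_dotProduct_le (a b : ι → ℝ) : 2 * (a ⬝ᵥ b) ≤ a ⬝ᵥ a + b ⬝ᵥ b := by
  have h := dotProduct_self_nonneg (a - b)
  simp only [sub_dotProduct, dotProduct_sub, dotProduct_comm b a] at h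
  linarith

theorem add_dotProduct_add_self_le (a b : ι → ℝ) :
    (a + b) ⬝ᵥ (a + b) ≤ 2 * (a ⬝ᵥ a) + 2 * (b ⬝ᵥ b) := by
  simp only [add_dotProduct, dotProduct_add, dotProduct_comm b a]
  linarith [two_mul_dotProduct_le a b]

theorem mulVec_dotProduct_comm {M : Matrix ι ι ℝ} (hM : Mᵀ = M) (a b : ι → ℝ) :
    (M *ᵥ a) ⬝ᵥ b = (M *ᵥ b) ⬝ᵥ a := by
  rw [dotProduct_comm, dotProduct_mulVec, ← mulVec_transpose, hM]

theorem transpose_mulVec_dotProduct (M : Matrix ι κ ℝ) (a : ι → ℝ) (b : κ → ℝ) :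
    (Mᵀ *ᵥ a) ⬝ᵥ b = a ⬝ᵥ (M *ᵥ b) := by
  rw [mulVec_transpose, dotProduct_mulVec]

/-- The operator norm of `M` for the Euclidean norms is at most `|L|`. -/
def HasOpBound (M : Matrix ι κ ℝ) (L : ℝ) : Prop :=
  ∀ v : κ → ℝ, (M *ᵥ v) ⬝ᵥ (M *ᵥ v) ≤ L ^ 2 * (v ⬝ᵥ v)

theorem HasOpBound.abs_apply_le {M : Matrix ι κ ℝ} {L : ℝ} (h : HasOpBound M L) (i : ι) (j : κ) :
    |M i j| ≤ |L| := by
  classical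
  rw [← sq_le_sq]
  calc M i j ^ 2 = M.col j i * M.col j i := sq _
    _ ≤ M.col j ⬝ᵥ M.col j :=
      Finset.single_le_sum (f := fun i => M.col j i * M.col j i) (fun i _ => mul_self_nonneg _)
        (Finset.mem_univ i)
    _ ≤ L ^ 2 := by simpa using h (Pi.single j 1)

end DotProduct

theorem IsPrimitiveFrom.eq_zero_of_dotProduct_self_deriv_le {ι : Type*} [Fintype ι] {t C : ℝ}
    {z z' : ℝ → ι → ℝ} (hz : IsPrimitiveFrom t z z') (hzt : z t = 0)
    (hle : ∀ᵐ s ∂(volume.restrict (Set.Ici t)), z' s ⬝ᵥ z' s ≤ C * (z s ⬝ᵥ z s))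
    {s : ℝ} (hs : t ≤ s) : z s = 0 := by
  refine dotProduct_self_eq_zero.1 (le_antisymm ?_ (dotProduct_self_nonneg (z s)))
  refine (hz.dotProduct hz).le_zero_of_deriv_le (C := 1 + C) (by simp [hzt]) ?_ hs
  filter_upwards [hle] with r hr
  rw [dotProduct_comm (z' r)]
  linarith [two_mul_dotProduct_le (z r) (z' r)]

section SquareIntegrable

variable {α ι : Type*} [MeasurableSpace α] {μ : Measure α} [Fintype ι]
  {f g : α → ι → ℝ}

theorem memLp_two_iff_integrable_dotProduct_self (hf : AEStronglyMeasurable f μ) :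
    MemLp f 2 μ ↔ Integrable (fun s => f s ⬝ᵥ f s) μ := by
  have hf_eval (i : ι) : AEStronglyMeasurable (fun s => f s i) μ :=
    (aemeasurable_pi_iff.1 hf.aemeasurable i).aestronglyMeasurable
  simp only [memLp_pi_iff, memLp_two_iff_integrable_sq (hf_eval _), dotProduct, ← sq]
  refine ⟨integrable_finsetSum _ ∘ fun h i _ => h i, fun h i => h.mono' ((hf_eval i).pow 2) ?_⟩
  refine Filter.Eventually.of_forall fun s => ?_
  rw [Real.norm_of_nonneg (sq_nonneg _)]
  exact Finset.single_le_sum (f := fun i => f s i ^ 2) (fun i _ => sq_nonneg _) (Finset.mem_univ i)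

theorem integrable_dotProduct (hf : MemLp f 2 μ) (hg : MemLp g 2 μ) :
    Integrable (fun s => f s ⬝ᵥ g s) μ :=
  integrable_finsetSum _ fun i _ => (hf.eval i).integrable_mul (hg.eval i)

theorem ae_eq_zero_of_integral_dotProduct_self (hf : MemLp f 2 μ)
    (h : ∫ s, f s ⬝ᵥ f s ∂μ = 0) : ∀ᵐ s ∂μ, f s = 0 := by
  rw [integral_eq_zero_iff_of_nonneg (fun s => dotProduct_self_nonneg (f s))
    (integrable_dotProduct hf hf)] at h
  filter_upwards [h] with s hs using dotProduct_self_eq_zero.1 hs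

theorem ae_eq_zero_of_forall_integral_dotProduct_eq_zero (hf : MemLp f 2 μ)
    (h : ∀ v : α → ι → ℝ, Measurable v → MemLp v 2 μ → ∫ s, f s ⬝ᵥ v s ∂μ = 0) :
    ∀ᵐ s ∂μ, f s = 0 := by
  have hmk := hf.1.ae_eq_mk
  refine ae_eq_zero_of_integral_dotProduct_self hf ?_
  rw [← h _ hf.1.stronglyMeasurable_mk.measurable ((memLp_congr_ae hmk).1 hf)]
  refine integral_congr_ae ?_
  filter_upwards [hmk] with s hs
  rw [← hs]

end SquareIntegrable

/-- The matrix-valued function `M` is measurable and essentially bounded, encoded entrywise. -/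
def EssBounded {α ι κ : Type*} [MeasurableSpace α] (μ : Measure α) (M : α → Matrix ι κ ℝ) : Prop :=
  ∀ i j, MemLp (fun s => M s i j) ∞ μ

namespace EssBounded

variable {α ι κ : Type*} [MeasurableSpace α] {μ : Measure α} {M : α → Matrix ι κ ℝ}

theorem transpose (hM : EssBounded μ M) : EssBounded μ fun s => (M s)ᵀ :=
  fun i j => hM j i

variable [Fintype ι] [Fintype κ]

theorem memLp_mulVec (hM : EssBounded μ M) {v : α → κ → ℝ} (hv : MemLp v 2 μ) :
    MemLp (fun s => M s *ᵥ v s) 2 μ :=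
  memLp_pi_iff.2 fun i => memLp_finsetSum _ fun j _ => (hv.eval j).mul (hM i j)

theorem of_hasOpBound {L : ℝ} (hM : ∀ i j, Measurable fun s => M s i j)
    (hL : ∀ᵐ s ∂μ, HasOpBound (M s) L) : EssBounded μ M := fun i j =>
  memLp_top_of_bound (hM i j).aestronglyMeasurable |L| (hL.mono fun _ hs => hs.abs_apply_le i j)

end EssBounded

section ExpMeasure

/-- The measure `e^{2Ks} ds` on `[t, ∞)`: the weighted space `L^{2,K}(t, ∞; ℝ^k)` consists of the
functions `f` with `MemLp f 2 (expMeasure t K)`. -/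
noncomputable def expMeasure (t K : ℝ) : Measure ℝ :=
  (volume.restrict (Set.Ici t)).withDensity fun s => ENNReal.ofReal (Real.exp (2 * K * s))

variable (t K : ℝ)

theorem ae_expMeasure : ae (expMeasure t K) = ae (volume.restrict (Set.Ici t)) := by
  ext s
  change (∀ᵐ x ∂expMeasure t K, x ∈ s) ↔ _
  rw [expMeasure, ae_withDensity_iff (by fun_prop)]
  simp [Real.exp_pos]

theorem integral_expMeasure (f : ℝ → ℝ) :
    ∫ s, f s ∂expMeasure t K = ∫ s in Set.Ici t, Real.exp (2 * K * s) * f s := by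
  rw [expMeasure, integral_withDensity_eq_integral_toReal_smul (by fun_prop) (by simp)]
  simp only [ENNReal.toReal_ofReal (Real.exp_pos _).le, smul_eq_mul]

theorem integrable_expMeasure_iff (f : ℝ → ℝ) :
    Integrable f (expMeasure t K) ↔
      IntegrableOn (fun s => Real.exp (2 * K * s) * f s) (Set.Ici t) := by
  rw [expMeasure, integrable_withDensity_iff_integrable_smul' (by fun_prop) (by simp), IntegrableOn]
  simp only [ENNReal.toReal_ofReal (Real.exp_pos _).le, smul_eq_mul]

variable {t K}

theorem memLp_two_expMeasure_iff {ι : Type*} [Fintype ι] {f : ℝ → ι → ℝ}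
    (hf : AEStronglyMeasurable f (volume.restrict (Set.Ici t))) :
    MemLp f 2 (expMeasure t K) ↔
      IntegrableOn (fun s => Real.exp (2 * K * s) * (f s ⬝ᵥ f s)) (Set.Ici t) := by
  have h_ac : expMeasure t K ≪ volume.restrict (Set.Ici t) := withDensity_absolutelyContinuous _ _
  rw [memLp_two_iff_integrable_dotProduct_self (hf.mono_ac h_ac), integrable_expMeasure_iff]

end ExpMeasure

section RunningCost

variable {ι κ : Type*} [Fintype ι] [Fintype κ]

/-- Twice the instantaneous cost `(⟨Qx, x⟩ + 2⟨Sx, u⟩ + ⟨Ru, u⟩) / 2` of the state `x` and the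
control `u`. -/
def runningCost (Q : Matrix ι ι ℝ) (S : Matrix κ ι ℝ) (R : Matrix κ κ ℝ) (x : ι → ℝ)
    (u : κ → ℝ) : ℝ :=
  (Q *ᵥ x) ⬝ᵥ x + 2 * ((S *ᵥ x) ⬝ᵥ u) + (R *ᵥ u) ⬝ᵥ u

variable {δ L : ℝ} {Q : Matrix ι ι ℝ} {S : Matrix κ ι ℝ} {R : Matrix κ κ ℝ}

theorem runningCost_add_smul (hQ : Qᵀ = Q) (hR : Rᵀ = R) (c : ℝ) (x z : ι → ℝ) (u v : κ → ℝ) :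
    runningCost Q S R (x + c • z) (u + c • v) = runningCost Q S R x u +
      c * (2 * ((Q *ᵥ x + Sᵀ *ᵥ u) ⬝ᵥ z + (S *ᵥ x + R *ᵥ u) ⬝ᵥ v)) +
        c ^ 2 * runningCost Q S R z v := by
  simp only [runningCost, mulVec_add, mulVec_smul, add_dotProduct, dotProduct_add, smul_dotProduct,
    dotProduct_smul, smul_eq_mul, transpose_mulVec_dotProduct, mulVec_dotProduct_comm hQ z x,
    mulVec_dotProduct_comm hR v u, dotProduct_comm u (S *ᵥ z)]
  ring

/-- The positive definiteness condition (PD) at one instant: `R` is symmetric with `R ⪰ δI`, and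
the Schur complement `Q - SᵀR⁻¹S` is positive semidefinite. -/
structure IsPosDefCost [DecidableEq κ] (δ : ℝ) (Q : Matrix ι ι ℝ) (S : Matrix κ ι ℝ)
    (R : Matrix κ κ ℝ) : Prop where
  isSymm : Rᵀ = R
  coercive : ∀ v : κ → ℝ, δ * (v ⬝ᵥ v) ≤ (R *ᵥ v) ⬝ᵥ v
  schur_nonneg : ∀ z : ι → ℝ, 0 ≤ ((Q - Sᵀ * R⁻¹ * S) *ᵥ z) ⬝ᵥ z

variable [DecidableEq κ]

theorem runningCost_eq_schur_add (hR : Rᵀ = R) (hdet : IsUnit R.det) (z : ι → ℝ) (v : κ → ℝ) :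
    runningCost Q S R z v = ((Q - Sᵀ * R⁻¹ * S) *ᵥ z) ⬝ᵥ z +
      (R *ᵥ (v + R⁻¹ *ᵥ (S *ᵥ z))) ⬝ᵥ (v + R⁻¹ *ᵥ (S *ᵥ z)) := by
  have hRw : R *ᵥ (R⁻¹ *ᵥ (S *ᵥ z)) = S *ᵥ z := by
    rw [mulVec_mulVec, mul_nonsing_inv R hdet, one_mulVec]
  have h_cross : (R *ᵥ v) ⬝ᵥ (R⁻¹ *ᵥ (S *ᵥ z)) = (S *ᵥ z) ⬝ᵥ v := by
    rw [mulVec_dotProduct_comm hR, hRw]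
  have h_schur : ((Sᵀ * R⁻¹ * S) *ᵥ z) ⬝ᵥ z = (S *ᵥ z) ⬝ᵥ (R⁻¹ *ᵥ (S *ᵥ z)) := by
    rw [← mulVec_mulVec, ← mulVec_mulVec, transpose_mulVec_dotProduct, dotProduct_comm]
  simp only [runningCost, sub_mulVec, sub_dotProduct, mulVec_add, add_dotProduct, dotProduct_add,
    hRw, h_cross, h_schur]
  ring

namespace IsPosDefCost

theorem isUnit_det (h : IsPosDefCost δ Q S R) (hδ : 0 < δ) : IsUnit R.det := by
  rw [← isUnit_iff_isUnit_det, ← mulVec_injective_iff_isUnit]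
  refine (injective_iff_map_eq_zero R.mulVecLin).2 fun v (hv : R *ᵥ v = 0) => ?_
  have h_coercive := h.coercive v
  rw [hv, zero_dotProduct] at h_coercive
  exact dotProduct_self_eq_zero.1
    (le_antisymm (nonpos_of_mul_nonpos_right h_coercive hδ) (dotProduct_self_nonneg v))

theorem runningCost_nonneg (h : IsPosDefCost δ Q S R) (hδ : 0 < δ) (z : ι → ℝ) (v : κ → ℝ) :
    0 ≤ runningCost Q S R z v := by
  rw [runningCost_eq_schur_add h.isSymm (h.isUnit_det hδ)]
  exact add_nonneg (h.schur_nonneg z)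
    ((mul_nonneg hδ.le (dotProduct_self_nonneg _)).trans (h.coercive _))

theorem eq_neg_of_runningCost_eq_zero (h : IsPosDefCost δ Q S R) (hδ : 0 < δ) {z : ι → ℝ}
    {v : κ → ℝ} (h_zero : runningCost Q S R z v = 0) : v = -(R⁻¹ *ᵥ (S *ᵥ z)) := by
  rw [runningCost_eq_schur_add h.isSymm (h.isUnit_det hδ)] at h_zero
  have h_coercive := h.coercive (v + R⁻¹ *ᵥ (S *ᵥ z))
  have h_schur := h.schur_nonneg z
  exact eq_neg_of_add_eq_zero_left (dotProduct_self_eq_zero.1 (le_antisymm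
    (nonpos_of_mul_nonpos_right (by linarith) hδ) (dotProduct_self_nonneg _)))

theorem control_le_of_runningCost_eq_zero (h : IsPosDefCost δ Q S R) (hδ : 0 < δ)
    (hS : HasOpBound S L) {z : ι → ℝ} {v : κ → ℝ} (h_zero : runningCost Q S R z v = 0) :
    v ⬝ᵥ v ≤ (L / δ) ^ 2 * (z ⬝ᵥ z) := by
  have hRv : R *ᵥ v = -(S *ᵥ z) := by
    rw [h.eq_neg_of_runningCost_eq_zero hδ h_zero, mulVec_neg, mulVec_mulVec,
      mul_nonsing_inv R (h.isUnit_det hδ), one_mulVec]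
  have h_coercive := mul_le_mul_of_nonneg_left (h.coercive v) hδ.le
  have h_young := two_mul_dotProduct_le (-(S *ᵥ z)) (δ • v)
  rw [hRv] at h_coercive
  simp only [neg_dotProduct_neg, smul_dotProduct, dotProduct_smul, smul_eq_mul] at h_young
  have h_sq : δ ^ 2 * (v ⬝ᵥ v) ≤ L ^ 2 * (z ⬝ᵥ z) := by linarith [hS z]
  rw [div_pow, div_mul_eq_mul_div, le_div_iff₀ (by positivity)]
  linarith

end IsPosDefCost

end RunningCost

/-- The weights `Q`, `S`, `R` of a quadratic cost integrated against `μ`: measurable, essentially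
bounded, and with `Q` and `R` symmetric. -/
structure IsQuadraticCost {α ι κ : Type*} [MeasurableSpace α] (μ : Measure α)
    (Q : α → Matrix ι ι ℝ) (S : α → Matrix κ ι ℝ) (R : α → Matrix κ κ ℝ) : Prop where
  essBounded_Q : EssBounded μ Q
  essBounded_S : EssBounded μ S
  essBounded_R : EssBounded μ R
  isSymm_Q : ∀ᵐ s ∂μ, (Q s)ᵀ = Q s
  isSymm_R : ∀ᵐ s ∂μ, (R s)ᵀ = R s

namespace IsQuadraticCost

variable {α ι κ : Type*} [MeasurableSpace α] {μ : Measure α} [Fintype ι] [Fintype κ]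
  {Q : α → Matrix ι ι ℝ} {S : α → Matrix κ ι ℝ} {R : α → Matrix κ κ ℝ}
  {x : α → ι → ℝ} {u : α → κ → ℝ}

theorem integrable_runningCost (hJ : IsQuadraticCost μ Q S R)
    (hx : MemLp x 2 μ) (hu : MemLp u 2 μ) :
    Integrable (fun s => runningCost (Q s) (S s) (R s) (x s) (u s)) μ :=
  ((integrable_dotProduct (hJ.essBounded_Q.memLp_mulVec hx) hx).add
    ((integrable_dotProduct (hJ.essBounded_S.memLp_mulVec hx) hu).const_mul 2)).add
      (integrable_dotProduct (hJ.essBounded_R.memLp_mulVec hu) hu)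

theorem memLp_mulVec_add_transpose_mulVec (hJ : IsQuadraticCost μ Q S R)
    (hx : MemLp x 2 μ) (hu : MemLp u 2 μ) :
    MemLp (fun s => Q s *ᵥ x s + (S s)ᵀ *ᵥ u s) 2 μ :=
  (hJ.essBounded_Q.memLp_mulVec hx).add (hJ.essBounded_S.transpose.memLp_mulVec hu)

theorem memLp_mulVec_add_mulVec (hJ : IsQuadraticCost μ Q S R)
    (hx : MemLp x 2 μ) (hu : MemLp u 2 μ) :
    MemLp (fun s => S s *ᵥ x s + R s *ᵥ u s) 2 μ :=
  (hJ.essBounded_S.memLp_mulVec hx).add (hJ.essBounded_R.memLp_mulVec hu)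

end IsQuadraticCost

section Duality

variable {ι : Type*} [Fintype ι] [DecidableEq ι] {t K : ℝ} {A : ℝ → Matrix ι ι ℝ}
  {y z p q : ℝ → ι → ℝ}

theorem integral_dotProduct_adjoint
    (hy : IsPrimitiveFrom t y fun s => -(((2 * K) • (1 : Matrix ι ι ℝ) + A s)ᵀ *ᵥ y s) - p s)
    (hz : IsPrimitiveFrom t z fun s => A s *ᵥ z s + q s)
    (hy_mem : MemLp y 2 (expMeasure t K)) (hz_mem : MemLp z 2 (expMeasure t K))
    (hp_mem : MemLp p 2 (expMeasure t K)) (hq_mem : MemLp q 2 (expMeasure t K)) :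
    ∫ s, p s ⬝ᵥ z s ∂expMeasure t K =
      Real.exp (2 * K * t) * (y t ⬝ᵥ z t) + ∫ s, y s ⬝ᵥ q s ∂expMeasure t K := by
  have h_deriv : IsPrimitiveFrom t (fun s => Real.exp (2 * K * s) * (y s ⬝ᵥ z s))
      fun s => Real.exp (2 * K * s) * (y s ⬝ᵥ q s - p s ⬝ᵥ z s) := by
    convert (IsPrimitiveFrom.exp_const_mul (2 * K)).mul (hy.dotProduct hz) using 2 with s
    simp only [transpose_add, transpose_smul, transpose_one, add_mulVec, smul_mulVec, one_mulVec,
      sub_dotProduct, neg_dotProduct, add_dotProduct, smul_dotProduct, dotProduct_add, smul_eq_mul,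
      transpose_mulVec_dotProduct]
    ring
  have hyq := integrable_dotProduct hy_mem hq_mem
  have hpz := integrable_dotProduct hp_mem hz_mem
  have h_boundary := h_deriv.integral_Ici_eq_neg
    ((integrable_expMeasure_iff t K _).1 (integrable_dotProduct hy_mem hz_mem))
    ((integrable_expMeasure_iff t K _).1 (hyq.sub hpz))
  rw [← integral_expMeasure, integral_sub hyq hpz] at h_boundary
  linarith

end Duality

section LinearQuadratic

variable {n m : ℕ} {t K δ L : ℝ} {A : ℝ → Matrix (Fin n) (Fin n) ℝ}
  {B : ℝ → Matrix (Fin n) (Fin m) ℝ} {Q : ℝ → Matrix (Fin n) (Fin n) ℝ}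
  {S : ℝ → Matrix (Fin m) (Fin n) ℝ} {R : ℝ → Matrix (Fin m) (Fin m) ℝ}
  {xt zt : Fin n → ℝ} {u v us : ℝ → Fin m → ℝ} {x z xs y : ℝ → Fin n → ℝ}

theorem adm_iff : Adm t K u ↔ Measurable u ∧ MemLp u 2 (expMeasure t K) :=
  and_congr_right fun hu => (memLp_two_expMeasure_iff hu.aestronglyMeasurable).symm

theorem isState_iff :
    IsState t A B xt u x ↔ x t = xt ∧ IsPrimitiveFrom t x fun s => A s *ᵥ x s + B s *ᵥ u s := by
  refine and_congr_right fun hxt => and_congr (forall₂_congr fun T hT => ?_) (by rw [hxt])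
  exact (intervalIntegrable_iff_integrableOn_Icc_of_le hT).symm

theorem Jcost_eq_integral_runningCost : Jcost t K Q S R x u =
    1 / 2 * ∫ s, runningCost (Q s) (S s) (R s) (x s) (u s) ∂expMeasure t K := by
  rw [integral_expMeasure]
  rfl

theorem Jcost_congr (h : Set.EqOn x z (Set.Ici t)) :
    Jcost t K Q S R x u = Jcost t K Q S R z u := by
  unfold Jcost
  congr 1
  exact setIntegral_congr_fun measurableSet_Ici fun s hs => by simp only [h hs]

namespace IsState

theorem isPrimitiveFrom (h : IsState t A B xt u x) :
    IsPrimitiveFrom t x fun s => A s *ᵥ x s + B s *ᵥ u s :=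
  (isState_iff.1 h).2

theorem add_smul (hx : IsState t A B xt u x) (hz : IsState t A B zt v z) (c : ℝ) :
    IsState t A B (xt + c • zt) (u + c • v) (x + c • z) := by
  refine isState_iff.2 ⟨by simp [hx.1, hz.1], ?_⟩
  convert hx.isPrimitiveFrom.add_smul hz.isPrimitiveFrom c using 2 with s
  simp only [Pi.add_apply, Pi.smul_apply, mulVec_add, mulVec_smul, smul_add]
  exact add_add_add_comm _ _ _ _

theorem eq_zero_of_control_le {C : ℝ} (hz : IsState t A B 0 v z)
    (hA : ∀ᵐ s ∂(volume.restrict (Set.Ici t)), HasOpBound (A s) L)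
    (hB : ∀ᵐ s ∂(volume.restrict (Set.Ici t)), HasOpBound (B s) L)
    (hv : ∀ᵐ s ∂(volume.restrict (Set.Ici t)), v s ⬝ᵥ v s ≤ C * (z s ⬝ᵥ z s)) {s : ℝ}
    (hs : t ≤ s) : z s = 0 := by
  refine hz.isPrimitiveFrom.eq_zero_of_dotProduct_self_deriv_le
    (C := 2 * L ^ 2 + 2 * (L ^ 2 * C)) hz.1 ?_ hs
  filter_upwards [hA, hB, hv] with r hAr hBr hvr
  have hBv : (B r *ᵥ v r) ⬝ᵥ (B r *ᵥ v r) ≤ L ^ 2 * (C * (z r ⬝ᵥ z r)) :=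
    (hBr (v r)).trans (mul_le_mul_of_nonneg_left hvr (sq_nonneg L))
  linarith [add_dotProduct_add_self_le (A r *ᵥ z r) (B r *ᵥ v r), hAr (z r)]

theorem eqOn (hx : IsState t A B xt u x) (hz : IsState t A B xt u z)
    (hA : ∀ᵐ s ∂(volume.restrict (Set.Ici t)), HasOpBound (A s) L)
    (hB : ∀ᵐ s ∂(volume.restrict (Set.Ici t)), HasOpBound (B s) L) :
    Set.EqOn x z (Set.Ici t) := by
  have h_diff : IsState t A B 0 0 (x + (-1 : ℝ) • z) := by simpa using hx.add_smul hz (-1)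
  intro s hs
  have h_zero := h_diff.eq_zero_of_control_le (C := 0) hA hB (by simp) hs
  simpa [add_neg_eq_zero] using h_zero

end IsState

/-- `u` is admissible and its trajectory `x` from `xt` lies in `L^{2,K}`. -/
structure IsAdmissiblePair (t K : ℝ) (A : ℝ → Matrix (Fin n) (Fin n) ℝ)
    (B : ℝ → Matrix (Fin n) (Fin m) ℝ) (xt : Fin n → ℝ) (u : ℝ → Fin m → ℝ)
    (x : ℝ → Fin n → ℝ) : Prop where
  adm : Adm t K u
  isState : IsState t A B xt u x
  state_memLp : MemLp x 2 (expMeasure t K)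

namespace IsAdmissiblePair

theorem of_integrableOn (hu : Adm t K u) (hx : IsState t A B xt u x)
    (hx_int : IntegrableOn (fun s => Real.exp (2 * K * s) * (x s ⬝ᵥ x s)) (Set.Ici t)) :
    IsAdmissiblePair t K A B xt u x :=
  ⟨hu, hx, (memLp_two_expMeasure_iff
    (hx.isPrimitiveFrom.continuousOn.aestronglyMeasurable measurableSet_Ici)).2 hx_int⟩

theorem control_memLp (h : IsAdmissiblePair t K A B xt u x) : MemLp u 2 (expMeasure t K) :=
  (adm_iff.1 h.adm).2

theorem add_smul (hx : IsAdmissiblePair t K A B xt u x) (hz : IsAdmissiblePair t K A B zt v z)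
    (c : ℝ) : IsAdmissiblePair t K A B (xt + c • zt) (u + c • v) (x + c • z) where
  adm := adm_iff.2 ⟨hx.adm.1.add (hz.adm.1.const_smul c),
    hx.control_memLp.add (hz.control_memLp.const_smul c)⟩
  isState := hx.isState.add_smul hz.isState c
  state_memLp := hx.state_memLp.add (hz.state_memLp.const_smul c)

theorem sub (hx : IsAdmissiblePair t K A B xt u x) (hz : IsAdmissiblePair t K A B zt v z) :
    IsAdmissiblePair t K A B (xt - zt) (u - v) (x - z) := by
  simpa only [neg_smul, one_smul, ← sub_eq_add_neg] using hx.add_smul hz (-1)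

end IsAdmissiblePair

/-- `y` is a solution in `L^{2,K}` of the adjoint equation
`y' = -(2K I + A)ᵀ y - Q x - Sᵀ u` along the pair `(u, x)`. -/
structure IsAdjointState (t K : ℝ) (A : ℝ → Matrix (Fin n) (Fin n) ℝ)
    (Q : ℝ → Matrix (Fin n) (Fin n) ℝ) (S : ℝ → Matrix (Fin m) (Fin n) ℝ)
    (u : ℝ → Fin m → ℝ) (x y : ℝ → Fin n → ℝ) : Prop where
  isPrimitiveFrom : IsPrimitiveFrom t y fun s =>
    -(((2 * K) • (1 : Matrix (Fin n) (Fin n) ℝ) + A s)ᵀ *ᵥ y s) - Q s *ᵥ x s - (S s)ᵀ *ᵥ u s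
  memLp : MemLp y 2 (expMeasure t K)

/-- `Bᵀ y + S x + R u`, the gradient of the cost with respect to the control when `y` is the
adjoint state of `(u, x)`. -/
def controlGradient (B : ℝ → Matrix (Fin n) (Fin m) ℝ) (S : ℝ → Matrix (Fin m) (Fin n) ℝ)
    (R : ℝ → Matrix (Fin m) (Fin m) ℝ) (u : ℝ → Fin m → ℝ) (x y : ℝ → Fin n → ℝ) (s : ℝ) :
    Fin m → ℝ :=
  (B s)ᵀ *ᵥ y s + S s *ᵥ x s + R s *ᵥ u s

theorem IsAdjointState.of_integrableOn
    (hy_int : ∀ T, t ≤ T → IntegrableOn (fun s =>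
      -(((2 * K) • (1 : Matrix (Fin n) (Fin n) ℝ) + A s)ᵀ *ᵥ y s) - Q s *ᵥ x s - (S s)ᵀ *ᵥ u s)
        (Set.Icc t T))
    (hy : ∀ s, t ≤ s → y s = y t + ∫ r in t..s,
      (-(((2 * K) • (1 : Matrix (Fin n) (Fin n) ℝ) + A r)ᵀ *ᵥ y r) - Q r *ᵥ x r - (S r)ᵀ *ᵥ u r))
    (hy_sq : IntegrableOn (fun s => Real.exp (2 * K * s) * (y s ⬝ᵥ y s)) (Set.Ici t)) :
    IsAdjointState t K A Q S u x y := by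
  have h_prim : IsPrimitiveFrom t y _ :=
    ⟨fun T hT => (intervalIntegrable_iff_integrableOn_Icc_of_le hT).2 (hy_int T hT), hy⟩
  exact ⟨h_prim, (memLp_two_expMeasure_iff
    (h_prim.continuousOn.aestronglyMeasurable measurableSet_Ici)).2 hy_sq⟩

namespace IsQuadraticCost

theorem memLp_controlGradient (hJ : IsQuadraticCost (expMeasure t K) Q S R)
    (hB : EssBounded (expMeasure t K) B) (hu : MemLp u 2 (expMeasure t K))
    (hx : MemLp x 2 (expMeasure t K)) (hy : MemLp y 2 (expMeasure t K)) :
    MemLp (controlGradient B S R u x y) 2 (expMeasure t K) :=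
  ((hB.transpose.memLp_mulVec hy).add (hJ.essBounded_S.memLp_mulVec hx)).add
    (hJ.essBounded_R.memLp_mulVec hu)

-- Duality moves the state variation `z` of the linear term onto the control variation `v`.
theorem integral_linear_term_eq (hJ : IsQuadraticCost (expMeasure t K) Q S R)
    (hB : EssBounded (expMeasure t K) B) (hs : IsAdmissiblePair t K A B xt us xs)
    (hy : IsAdjointState t K A Q S us xs y) (hz : IsAdmissiblePair t K A B 0 v z) :
    ∫ s, ((Q s *ᵥ xs s + (S s)ᵀ *ᵥ us s) ⬝ᵥ z s + (S s *ᵥ xs s + R s *ᵥ us s) ⬝ᵥ v s)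
        ∂expMeasure t K =
      ∫ s, controlGradient B S R us xs y s ⬝ᵥ v s ∂expMeasure t K := by
  have hp := hJ.memLp_mulVec_add_transpose_mulVec hs.state_memLp hs.control_memLp
  have hBv := hB.memLp_mulVec hz.control_memLp
  have h_int := integrable_dotProduct
    (hJ.memLp_mulVec_add_mulVec hs.state_memLp hs.control_memLp) hz.control_memLp
  have h_dual := integral_dotProduct_adjoint (by simpa only [sub_sub] using hy.isPrimitiveFrom)
    hz.isState.isPrimitiveFrom hy.memLp hz.state_memLp hp hBv
  rw [hz.isState.1, dotProduct_zero, mul_zero, zero_add] at h_dual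
  rw [integral_add (integrable_dotProduct hp hz.state_memLp) h_int, h_dual,
    ← integral_add (integrable_dotProduct hy.memLp hBv) h_int]
  simp only [controlGradient, add_assoc, add_dotProduct, transpose_mulVec_dotProduct]

theorem Jcost_add_smul (hJ : IsQuadraticCost (expMeasure t K) Q S R)
    (hB : EssBounded (expMeasure t K) B) (hs : IsAdmissiblePair t K A B xt us xs)
    (hy : IsAdjointState t K A Q S us xs y) (hz : IsAdmissiblePair t K A B 0 v z) (c : ℝ) :
    Jcost t K Q S R (xs + c • z) (us + c • v) = Jcost t K Q S R xs us +
      c * (∫ s, controlGradient B S R us xs y s ⬝ᵥ v s ∂expMeasure t K) +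
        c ^ 2 * Jcost t K Q S R z v := by
  have h_expand : (fun s => runningCost (Q s) (S s) (R s) ((xs + c • z) s) ((us + c • v) s))
      =ᵐ[expMeasure t K] fun s => runningCost (Q s) (S s) (R s) (xs s) (us s) +
        c * (2 * ((Q s *ᵥ xs s + (S s)ᵀ *ᵥ us s) ⬝ᵥ z s +
          (S s *ᵥ xs s + R s *ᵥ us s) ⬝ᵥ v s)) +
            c ^ 2 * runningCost (Q s) (S s) (R s) (z s) (v s) := by
    filter_upwards [hJ.isSymm_Q, hJ.isSymm_R] with s hQ hR
    exact runningCost_add_smul hQ hR c (xs s) (z s) (us s) (v s)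
  have h_linear := (integrable_dotProduct
    (hJ.memLp_mulVec_add_transpose_mulVec hs.state_memLp hs.control_memLp) hz.state_memLp).fun_add
      (integrable_dotProduct
        (hJ.memLp_mulVec_add_mulVec hs.state_memLp hs.control_memLp) hz.control_memLp)
  have h_base := hJ.integrable_runningCost hs.state_memLp hs.control_memLp
  have h_quad := hJ.integrable_runningCost hz.state_memLp hz.control_memLp
  have h_integral := integral_congr_ae h_expand
  rw [integral_add (h_base.fun_add ((h_linear.const_mul 2).const_mul c)) (h_quad.const_mul _),
    integral_add h_base ((h_linear.const_mul 2).const_mul c)] at h_integral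
  simp only [integral_const_mul] at h_integral
  rw [hJ.integral_linear_term_eq hB hs hy hz] at h_integral
  simp only [Jcost_eq_integral_runningCost, h_integral]
  ring

theorem Jcost_eq_add_of_controlGradient_eq_zero (hJ : IsQuadraticCost (expMeasure t K) Q S R)
    (hB : EssBounded (expMeasure t K) B) (hs : IsAdmissiblePair t K A B xt us xs)
    (hy : IsAdjointState t K A Q S us xs y) (hx : IsAdmissiblePair t K A B xt u x)
    (h_grad : ∀ᵐ s ∂expMeasure t K, controlGradient B S R us xs y s = 0) :
    Jcost t K Q S R x u = Jcost t K Q S R xs us + Jcost t K Q S R (x - xs) (u - us) := by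
  have hz : IsAdmissiblePair t K A B 0 (u - us) (x - xs) := by simpa only [sub_self] using hx.sub hs
  have h_first : ∫ s, controlGradient B S R us xs y s ⬝ᵥ (u - us) s ∂expMeasure t K = 0 :=
    integral_eq_zero_of_ae (h_grad.mono fun s hs => by simp [hs])
  simpa only [one_smul, add_sub_cancel, h_first, mul_zero, add_zero, one_pow, one_mul] using
    hJ.Jcost_add_smul hB hs hy hz 1

-- Along each line `us + c • v` the cost is a quadratic polynomial in `c` minimized at `c = 0`, so
-- its linear coefficient vanishes.
theorem controlGradient_eq_zero_of_isMinimizer (hJ : IsQuadraticCost (expMeasure t K) Q S R)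
    (hB : EssBounded (expMeasure t K) B) (hs : IsAdmissiblePair t K A B xt us xs)
    (hy : IsAdjointState t K A Q S us xs y)
    (h_exists : ∀ v, Adm t K v → ∃ z, IsAdmissiblePair t K A B 0 v z)
    (h_min : ∀ u x, IsAdmissiblePair t K A B xt u x →
      Jcost t K Q S R xs us ≤ Jcost t K Q S R x u) :
    ∀ᵐ s ∂expMeasure t K, controlGradient B S R us xs y s = 0 := by
  refine ae_eq_zero_of_forall_integral_dotProduct_eq_zero
    (hJ.memLp_controlGradient hB hs.control_memLp hs.state_memLp hy.memLp) fun v hv_meas hv => ?_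
  obtain ⟨z, hz⟩ := h_exists v (adm_iff.2 ⟨hv_meas, hv⟩)
  have h_nonneg (c : ℝ) : 0 ≤ Jcost t K Q S R z v * (c * c) +
      (∫ s, controlGradient B S R us xs y s ⬝ᵥ v s ∂expMeasure t K) * c + 0 := by
    have h_le := h_min _ _ (by simpa only [smul_zero, add_zero] using hs.add_smul hz c)
    rw [hJ.Jcost_add_smul hB hs hy hz c] at h_le
    linarith
  have h_discrim := discrim_le_zero h_nonneg
  rw [discrim, mul_zero, sub_zero] at h_discrim
  exact pow_eq_zero_iff two_ne_zero |>.1 (le_antisymm h_discrim (sq_nonneg _))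

end IsQuadraticCost

theorem Jcost_nonneg (hδ : 0 < δ)
    (hPD : ∀ᵐ s ∂expMeasure t K, IsPosDefCost δ (Q s) (S s) (R s)) :
    0 ≤ Jcost t K Q S R x u := by
  rw [Jcost_eq_integral_runningCost]
  exact mul_nonneg one_half_pos.le
    (integral_nonneg_of_ae (hPD.mono fun s hs => hs.runningCost_nonneg hδ (x s) (u s)))

theorem IsAdmissiblePair.control_ae_eq_zero_of_Jcost_eq_zero (hδ : 0 < δ)
    (hJ : IsQuadraticCost (expMeasure t K) Q S R)
    (hPD : ∀ᵐ s ∂expMeasure t K, IsPosDefCost δ (Q s) (S s) (R s))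
    (hA : ∀ᵐ s ∂expMeasure t K, HasOpBound (A s) L)
    (hB : ∀ᵐ s ∂expMeasure t K, HasOpBound (B s) L)
    (hS : ∀ᵐ s ∂expMeasure t K, HasOpBound (S s) L)
    (hz : IsAdmissiblePair t K A B 0 v z) (h_cost : Jcost t K Q S R z v = 0) :
    ∀ᵐ s ∂expMeasure t K, v s = 0 := by
  rw [Jcost_eq_integral_runningCost, mul_eq_zero_iff_left (by norm_num),
    integral_eq_zero_iff_of_nonneg_ae
      (hPD.mono fun s hs => hs.runningCost_nonneg hδ (z s) (v s))
      (hJ.integrable_runningCost hz.state_memLp hz.control_memLp)] at h_cost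
  have h_control : ∀ᵐ s ∂expMeasure t K, v s ⬝ᵥ v s ≤ (L / δ) ^ 2 * (z s ⬝ᵥ z s) := by
    filter_upwards [h_cost, hPD, hS] with s hs hPDs hSs
      using hPDs.control_le_of_runningCost_eq_zero hδ hSs hs
  rw [ae_expMeasure] at hA hB h_control ⊢
  filter_upwards [h_control, ae_restrict_mem measurableSet_Ici] with s hs hts
  rw [hz.isState.eq_zero_of_control_le hA hB h_control hts, dotProduct_zero, mul_zero] at hs
  exact dotProduct_self_eq_zero.1 (le_antisymm hs (dotProduct_self_nonneg (v s)))

theorem isMinimizer_iff_controlGradient_eq_zero (hδ : 0 < δ)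
    (hJ : IsQuadraticCost (expMeasure t K) Q S R)
    (hPD : ∀ᵐ s ∂expMeasure t K, IsPosDefCost δ (Q s) (S s) (R s))
    (hB : EssBounded (expMeasure t K) B) (hs : IsAdmissiblePair t K A B xt us xs)
    (hy : IsAdjointState t K A Q S us xs y)
    (h_exists : ∀ v, Adm t K v → ∃ z, IsAdmissiblePair t K A B 0 v z) :
    (∀ u x, IsAdmissiblePair t K A B xt u x → Jcost t K Q S R xs us ≤ Jcost t K Q S R x u) ↔
      ∀ᵐ s ∂expMeasure t K, controlGradient B S R us xs y s = 0 := by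
  refine ⟨hJ.controlGradient_eq_zero_of_isMinimizer hB hs hy h_exists, fun h_grad u x hx => ?_⟩
  rw [hJ.Jcost_eq_add_of_controlGradient_eq_zero hB hs hy hx h_grad]
  exact le_add_of_nonneg_right (Jcost_nonneg hδ hPD)

theorem IsAdmissiblePair.control_ae_eq_of_Jcost_eq (hδ : 0 < δ)
    (hJ : IsQuadraticCost (expMeasure t K) Q S R)
    (hPD : ∀ᵐ s ∂expMeasure t K, IsPosDefCost δ (Q s) (S s) (R s))
    (hA : ∀ᵐ s ∂expMeasure t K, HasOpBound (A s) L)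
    (hB : ∀ᵐ s ∂expMeasure t K, HasOpBound (B s) L)
    (hS : ∀ᵐ s ∂expMeasure t K, HasOpBound (S s) L)
    (hB_ess : EssBounded (expMeasure t K) B) (hx : IsAdmissiblePair t K A B xt u x)
    (hs : IsAdmissiblePair t K A B xt us xs) (hy : IsAdjointState t K A Q S us xs y)
    (h_grad : ∀ᵐ s ∂expMeasure t K, controlGradient B S R us xs y s = 0)
    (h_cost : Jcost t K Q S R x u = Jcost t K Q S R xs us) : u =ᵐ[expMeasure t K] us := by
  rw [hJ.Jcost_eq_add_of_controlGradient_eq_zero hB_ess hs hy hx h_grad, add_eq_left] at h_cost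
  have h_diff : IsAdmissiblePair t K A B 0 (u - us) (x - xs) := by
    simpa only [sub_self] using hx.sub hs
  filter_upwards [h_diff.control_ae_eq_zero_of_Jcost_eq_zero hδ hJ hPD hA hB hS h_cost] with s h
    using sub_eq_zero.1 h

section SolutionMap

variable {X : (ℝ → Fin m → ℝ) → ℝ → Fin n → ℝ}

theorem exists_isAdmissiblePair_zero (hX : ∀ u, Adm t K u → IsAdmissiblePair t K A B xt u (X u))
    (hus : Adm t K us) (hv : Adm t K v) : ∃ z, IsAdmissiblePair t K A B 0 v z := by
  have h_sum : Adm t K (us + v) := by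
    rw [adm_iff] at hus hv ⊢
    exact ⟨hus.1.add hv.1, hus.2.add hv.2⟩
  refine ⟨X (us + v) - X us, ?_⟩
  simpa only [sub_self, add_sub_cancel_left] using (hX _ h_sum).sub (hX us hus)

theorem forall_adm_le_Jcost_iff (hX : ∀ u, Adm t K u → IsAdmissiblePair t K A B xt u (X u))
    (hA : ∀ᵐ s ∂expMeasure t K, HasOpBound (A s) L)
    (hB : ∀ᵐ s ∂expMeasure t K, HasOpBound (B s) L) (c : ℝ) :
    (∀ u, Adm t K u → c ≤ Jcost t K Q S R (X u) u) ↔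
      ∀ u x, IsAdmissiblePair t K A B xt u x → c ≤ Jcost t K Q S R x u := by
  refine ⟨fun h u x hx => ?_, fun h u hu => h u (X u) (hX u hu)⟩
  rw [ae_expMeasure] at hA hB
  rw [Jcost_congr (hx.isState.eqOn (hX u hx.adm).isState hA hB)]
  exact h u hx.adm

end SolutionMap

end LinearQuadratic

theorem stmt_7_general (n m : ℕ) (t K δ : ℝ) (hδ : 0 < δ)
    (A : ℝ → Matrix (Fin n) (Fin n) ℝ) (B : ℝ → Matrix (Fin n) (Fin m) ℝ)
    (Q : ℝ → Matrix (Fin n) (Fin n) ℝ) (S : ℝ → Matrix (Fin m) (Fin n) ℝ)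
    (R : ℝ → Matrix (Fin m) (Fin m) ℝ)
    (hB : ∀ i j, Measurable fun s => B s i j)
    (hQ : ∀ i j, Measurable fun s => Q s i j)
    (hS : ∀ i j, Measurable fun s => S s i j)
    (hR : ∀ i j, Measurable fun s => R s i j)
    (hQsym : ∀ᵐ s ∂(volume.restrict (Set.Ici t)), (Q s)ᵀ = Q s)
    (hRsym : ∀ᵐ s ∂(volume.restrict (Set.Ici t)), (R s)ᵀ = R s)
    (hbd : ∃ L : ℝ, ∀ᵐ s ∂(volume.restrict (Set.Ici t)),
      (∀ v : Fin n → ℝ, (A s *ᵥ v) ⬝ᵥ (A s *ᵥ v) ≤ L^2 * (v ⬝ᵥ v)) ∧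
      (∀ v : Fin m → ℝ, (B s *ᵥ v) ⬝ᵥ (B s *ᵥ v) ≤ L^2 * (v ⬝ᵥ v)) ∧
      (∀ v : Fin n → ℝ, (Q s *ᵥ v) ⬝ᵥ (Q s *ᵥ v) ≤ L^2 * (v ⬝ᵥ v)) ∧
      (∀ v : Fin n → ℝ, (S s *ᵥ v) ⬝ᵥ (S s *ᵥ v) ≤ L^2 * (v ⬝ᵥ v)) ∧
      (∀ v : Fin m → ℝ, (R s *ᵥ v) ⬝ᵥ (R s *ᵥ v) ≤ L^2 * (v ⬝ᵥ v)))
    (hRpd : ∀ᵐ s ∂(volume.restrict (Set.Ici t)),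
      ∀ v : Fin m → ℝ, δ * (v ⬝ᵥ v) ≤ (R s *ᵥ v) ⬝ᵥ v)
    (hPD : ∀ᵐ s ∂(volume.restrict (Set.Ici t)),
      ∀ v : Fin n → ℝ, 0 ≤ ((Q s - (S s)ᵀ * (R s)⁻¹ * S s) *ᵥ v) ⬝ᵥ v)
    (xt : Fin n → ℝ)
    (X : (ℝ → (Fin m → ℝ)) → ℝ → (Fin n → ℝ))
    (hX : ∀ u, Adm t K u → IsState t A B xt u (X u) ∧
      MeasureTheory.IntegrableOn
        (fun s => Real.exp (2*K*s) * (X u s ⬝ᵥ X u s)) (Set.Ici t))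
    (ustar : ℝ → (Fin m → ℝ)) (hustar : Adm t K ustar)
    (ystar : ℝ → (Fin n → ℝ))
    (hyint : ∀ T, t ≤ T → MeasureTheory.IntegrableOn (fun s =>
      -((((2*K) • (1 : Matrix (Fin n) (Fin n) ℝ) + A s)ᵀ) *ᵥ ystar s)
        - Q s *ᵥ X ustar s - (S s)ᵀ *ᵥ ustar s) (Set.Icc t T))
    (hyeq : ∀ s, t ≤ s → ystar s = ystar t + ∫ r in t..s,
      (-((((2*K) • (1 : Matrix (Fin n) (Fin n) ℝ) + A r)ᵀ) *ᵥ ystar r)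
        - Q r *ᵥ X ustar r - (S r)ᵀ *ᵥ ustar r))
    (hyL2 : MeasureTheory.IntegrableOn
      (fun s => Real.exp (2*K*s) * (ystar s ⬝ᵥ ystar s)) (Set.Ici t)) :
    ((∀ u, Adm t K u →
        Jcost t K Q S R (X ustar) ustar ≤ Jcost t K Q S R (X u) u) ↔
      (∀ᵐ s ∂(volume.restrict (Set.Ici t)),
        (B s)ᵀ *ᵥ ystar s + S s *ᵥ X ustar s + R s *ᵥ ustar s = 0)) ∧
    ((∀ u, Adm t K u →
        Jcost t K Q S R (X ustar) ustar ≤ Jcost t K Q S R (X u) u) →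
      ∀ u, Adm t K u → Jcost t K Q S R (X u) u = Jcost t K Q S R (X ustar) ustar →
        u =ᵐ[volume.restrict (Set.Ici t)] ustar) := by
  obtain ⟨L, hL⟩ := hbd
  simp only [← ae_expMeasure t K] at hQsym hRsym hL hRpd hPD ⊢
  have hA_bound : ∀ᵐ s ∂expMeasure t K, HasOpBound (A s) L := hL.mono fun s h => h.1
  have hB_bound : ∀ᵐ s ∂expMeasure t K, HasOpBound (B s) L := hL.mono fun s h => h.2.1
  have hS_bound : ∀ᵐ s ∂expMeasure t K, HasOpBound (S s) L := hL.mono fun s h => h.2.2.2.1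
  have hB_ess := EssBounded.of_hasOpBound hB hB_bound
  have hJ : IsQuadraticCost (expMeasure t K) Q S R :=
    ⟨.of_hasOpBound hQ (hL.mono fun s h => h.2.2.1), .of_hasOpBound hS hS_bound,
      .of_hasOpBound hR (hL.mono fun s h => h.2.2.2.2), hQsym, hRsym⟩
  have h_posDef : ∀ᵐ s ∂expMeasure t K, IsPosDefCost δ (Q s) (S s) (R s) := by
    filter_upwards [hRsym, hRpd, hPD] with s h_symm h_coer h_schur using ⟨h_symm, h_coer, h_schur⟩
  have h_pair (u) (hu : Adm t K u) : IsAdmissiblePair t K A B xt u (X u) :=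
    .of_integrableOn hu (hX u hu).1 (hX u hu).2
  have hy := IsAdjointState.of_integrableOn hyint hyeq hyL2
  have h_iff := (forall_adm_le_Jcost_iff h_pair hA_bound hB_bound _).trans
    (isMinimizer_iff_controlGradient_eq_zero hδ hJ h_posDef hB_ess (h_pair _ hustar) hy
      fun v hv => exists_isAdmissiblePair_zero h_pair hustar hv)
  exact ⟨h_iff, fun h_min u hu h_cost => (h_pair u hu).control_ae_eq_of_Jcost_eq hδ hJ h_posDef
    hA_bound hB_bound hS_bound hB_ess (h_pair _ hustar) hy (h_iff.1 h_min) h_cost⟩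

/-- Deterministic component of Lemma 3.2: under the positive definiteness
condition (PD), an admissible control `u*` minimizes the cost `J` over all
admissible controls if and only if the stationarity condition
`Bᵀ y* + S x* + R u* = 0` holds a.e., where `y*` solves the adjoint equation;
and in that case the minimizer is unique up to a.e. equality. -/
theorem stmt_7 (n m : ℕ) (t K δ : ℝ) (ht : 0 ≤ t) (hδ : 0 < δ)
    (A : ℝ → Matrix (Fin n) (Fin n) ℝ) (B : ℝ → Matrix (Fin n) (Fin m) ℝ)
    (Q : ℝ → Matrix (Fin n) (Fin n) ℝ) (S : ℝ → Matrix (Fin m) (Fin n) ℝ)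
    (R : ℝ → Matrix (Fin m) (Fin m) ℝ)
    (hA : ∀ i j, Measurable fun s => A s i j)
    (hB : ∀ i j, Measurable fun s => B s i j)
    (hQ : ∀ i j, Measurable fun s => Q s i j)
    (hS : ∀ i j, Measurable fun s => S s i j)
    (hR : ∀ i j, Measurable fun s => R s i j)
    (hQsym : ∀ᵐ s ∂(volume.restrict (Set.Ici t)), (Q s)ᵀ = Q s)
    (hRsym : ∀ᵐ s ∂(volume.restrict (Set.Ici t)), (R s)ᵀ = R s)
    (hbd : ∃ L : ℝ, ∀ᵐ s ∂(volume.restrict (Set.Ici t)),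
      (∀ v : Fin n → ℝ, (A s *ᵥ v) ⬝ᵥ (A s *ᵥ v) ≤ L^2 * (v ⬝ᵥ v)) ∧
      (∀ v : Fin m → ℝ, (B s *ᵥ v) ⬝ᵥ (B s *ᵥ v) ≤ L^2 * (v ⬝ᵥ v)) ∧
      (∀ v : Fin n → ℝ, (Q s *ᵥ v) ⬝ᵥ (Q s *ᵥ v) ≤ L^2 * (v ⬝ᵥ v)) ∧
      (∀ v : Fin n → ℝ, (S s *ᵥ v) ⬝ᵥ (S s *ᵥ v) ≤ L^2 * (v ⬝ᵥ v)) ∧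
      (∀ v : Fin m → ℝ, (R s *ᵥ v) ⬝ᵥ (R s *ᵥ v) ≤ L^2 * (v ⬝ᵥ v)))
    (hRpd : ∀ᵐ s ∂(volume.restrict (Set.Ici t)),
      ∀ v : Fin m → ℝ, δ * (v ⬝ᵥ v) ≤ (R s *ᵥ v) ⬝ᵥ v)
    (hPD : ∀ᵐ s ∂(volume.restrict (Set.Ici t)),
      ∀ v : Fin n → ℝ, 0 ≤ ((Q s - (S s)ᵀ * (R s)⁻¹ * S s) *ᵥ v) ⬝ᵥ v)
    (xt : Fin n → ℝ)
    (X : (ℝ → (Fin m → ℝ)) → ℝ → (Fin n → ℝ))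
    (hX : ∀ u, Adm t K u → IsState t A B xt u (X u) ∧
      MeasureTheory.IntegrableOn
        (fun s => Real.exp (2*K*s) * (X u s ⬝ᵥ X u s)) (Set.Ici t))
    (hXuniq : ∀ u x', Adm t K u → IsState t A B xt u x' →
      MeasureTheory.IntegrableOn
        (fun s => Real.exp (2*K*s) * (x' s ⬝ᵥ x' s)) (Set.Ici t) →
      ∀ s, t ≤ s → x' s = X u s)
    (ustar : ℝ → (Fin m → ℝ)) (hustar : Adm t K ustar)
    (ystar : ℝ → (Fin n → ℝ))
    (hyint : ∀ T, t ≤ T → MeasureTheory.IntegrableOn (fun s =>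
      -((((2*K) • (1 : Matrix (Fin n) (Fin n) ℝ) + A s)ᵀ) *ᵥ ystar s)
        - Q s *ᵥ X ustar s - (S s)ᵀ *ᵥ ustar s) (Set.Icc t T))
    (hyeq : ∀ s, t ≤ s → ystar s = ystar t + ∫ r in t..s,
      (-((((2*K) • (1 : Matrix (Fin n) (Fin n) ℝ) + A r)ᵀ) *ᵥ ystar r)
        - Q r *ᵥ X ustar r - (S r)ᵀ *ᵥ ustar r))
    (hyL2 : MeasureTheory.IntegrableOn
      (fun s => Real.exp (2*K*s) * (ystar s ⬝ᵥ ystar s)) (Set.Ici t)) :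
    ((∀ u, Adm t K u →
        Jcost t K Q S R (X ustar) ustar ≤ Jcost t K Q S R (X u) u) ↔
      (∀ᵐ s ∂(volume.restrict (Set.Ici t)),
        (B s)ᵀ *ᵥ ystar s + S s *ᵥ X ustar s + R s *ᵥ ustar s = 0)) ∧
    ((∀ u, Adm t K u →
        Jcost t K Q S R (X ustar) ustar ≤ Jcost t K Q S R (X u) u) →
      ∀ u, Adm t K u → Jcost t K Q S R (X u) u = Jcost t K Q S R (X ustar) ustar →
        u =ᵐ[volume.restrict (Set.Ici t)] ustar) :=
  stmt_7_general n m t K δ hδ A B Q S R hB hQ hS hR hQsym hRsym hbd hRpd hPD xt X hX ustar hustar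
    ystar hyint hyeq hyL2
end
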